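/- arXiv:0804.0288 — 2 statements merged into one kernel-verified Lean document; each statement's English description precedes it below -/
import Mathlib

section
/- There exists a sequence of maps μ_n : (ℝ² ∖ {0}) → (SL(2,ℤ) → ℝ), n ∈ ℕ, such that: (i) for every n and every nonzero v ∈ ℝ², μ_n(v) is a probability density on SL(2,ℤ); (ii) each μ_n is continuous as a map into ℓ¹(SL(2,ℤ)), i.e., v ↦ μ_n(v) is continuous with respect to the norm ‖·‖₁; (iii) μ_n(c·v) = μ_n(v) for every real c ≠ 0 and every nonzero v ∈ ℝ² (so μ_n descends to the real projective line); and (iv) for every g ∈ SL(2,ℤ), sup over nonzero v ∈ ℝ² of ‖μ_n(g·v) − g·μ_n(v)‖₁ tends to 0 as n → ∞, where g·v denotes matrix–vector multiplication. (This expresses amenability of the action of SL(2,ℤ) on the real projective line.) -/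
/-!
A direction `v` is encoded by the ray of positive definite forms `r ↦ ‖r‖² + ⟪x, r⟫²` for
`x = exp t • v / ‖v‖`, `t → ∞`, and each form by the density on `SL(2, ℤ)` proportional to an
inverse power of the total value of the form on the rows of `h⁻¹`. Since `g` has determinant `1`,
it carries the ray of `v` to a curve asymptotic, uniformly in `v`, to the ray of `g v` with time
shifted by `2 log (‖g v‖ / ‖v‖)`. The shift is bounded in terms of `g`, so averaging over
`t ∈ [T, 2 T]` makes its effect `O(1 / T)`.
-/

open Filter MeasureTheory NormedSpace Set Topology
open Matrix (toEuclideanCLM)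
open scoped InnerProductSpace Matrix lp

section Normed

variable {V : Type*} [NormedAddCommGroup V] [NormedSpace ℝ V]

lemma norm_normalize_sub_normalize_le (x : V) {y : V} (hy : y ≠ 0) :
    ‖normalize x - normalize y‖ ≤ 2 * (‖x - y‖ / ‖y‖) := by
  have hy' : 0 < ‖y‖ := norm_pos_iff.2 hy
  have h_split : ‖y‖ • (normalize x - normalize y) = (‖y‖ - ‖x‖) • normalize x + (x - y) := by
    rw [smul_sub, sub_smul, norm_smul_normalize, norm_smul_normalize]
    abel
  have h_norm : ‖normalize x‖ ≤ 1 := by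
    rw [NormedSpace.normalize, norm_smul, norm_inv, norm_norm]
    exact inv_mul_le_one
  have h_radial : ‖(‖y‖ - ‖x‖) • normalize x‖ ≤ ‖x - y‖ := by
    rw [norm_smul, norm_sub_rev x y]
    exact (mul_le_of_le_one_right (norm_nonneg _) h_norm).trans (abs_norm_sub_norm_le y x)
  rw [← mul_div_assoc, le_div_iff₀' hy', ← norm_smul_of_nonneg hy'.le, h_split, two_mul]
  exact norm_add_le_of_le h_radial le_rfl

lemma continuousAt_normalize {x : V} (hx : x ≠ 0) : ContinuousAt (normalize : V → V) x :=
  (continuousAt_id.norm.inv₀ (norm_ne_zero_iff.2 hx)).smul continuousAt_id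

lemma rescale_map_exp_smul_normalize {W : Type*} [NormedAddCommGroup W] [NormedSpace ℝ W]
    {F : Type*} [FunLike F V W] [LinearMapClass F ℝ V W]
    (f : F) {v : V} (hfv : f v ≠ 0) (t : ℝ) :
    (‖f (Real.exp t • normalize v)‖ / ‖Real.exp t • normalize v‖) • f (Real.exp t • normalize v)
      = Real.exp (t + 2 * Real.log (‖f v‖ / ‖v‖)) • normalize (f v) := by
  have hv : v ≠ 0 := fun h => hfv (by rw [h, map_zero])
  have hv' : 0 < ‖v‖ := norm_pos_iff.2 hv
  have hfv' : 0 < ‖f v‖ := norm_pos_iff.2 hfv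
  have h_coeff : ‖Real.exp t * ‖v‖⁻¹‖ ≠ 0 := norm_ne_zero_iff.2 (by positivity)
  have h_exp : Real.exp (t + 2 * Real.log (‖f v‖ / ‖v‖)) = Real.exp t * (‖f v‖ / ‖v‖) ^ 2 := by
    rw [Real.exp_add, two_mul, Real.exp_add, Real.exp_log (div_pos hfv' hv'), sq]
  rw [NormedSpace.normalize, NormedSpace.normalize, smul_smul, map_smul, norm_smul, norm_smul,
    mul_div_mul_left _ _ h_coeff, smul_smul, smul_smul, h_exp]
  congr 1
  field_simp

lemma norm_intervalAverage_comp_add_sub_le {f : ℝ → V} (hf : Continuous f) {C : ℝ}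
    (hC : ∀ t, ‖f t‖ ≤ C) {a b : ℝ} (hab : a < b) (s : ℝ) :
    ‖(⨍ t in a..b, f (t + s)) - ⨍ t in a..b, f t‖ ≤ 2 * C * |s| / (b - a) := by
  have h_ends : (∫ t in a..b, f (t + s)) - ∫ t in a..b, f t
      = (∫ t in b..b + s, f t) - ∫ t in a..a + s, f t := by
    rw [intervalIntegral.integral_comp_add_right,
      intervalIntegral.integral_interval_sub_interval_comm' (hf.intervalIntegrable _ _)
        (hf.intervalIntegrable _ _) (hf.intervalIntegrable _ _)]
  have h_end (c : ℝ) : ‖∫ t in c..c + s, f t‖ ≤ C * |s| := by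
    simpa using intervalIntegral.norm_integral_le_of_norm_le_const (a := c) (b := c + s)
      fun t _ => hC t
  rw [interval_average_eq, interval_average_eq, ← smul_sub, h_ends, norm_smul,
    Real.norm_of_nonneg (inv_nonneg.2 (sub_nonneg.2 hab.le)), inv_mul_eq_div]
  have := sub_pos.2 hab
  gcongr
  linarith [norm_sub_le_of_le (h_end b) (h_end a)]

lemma norm_intervalAverage_le_of_norm_le_const {f : ℝ → V} {a b C : ℝ} (hab : a < b)
    (h : ∀ t ∈ Ioc a b, ‖f t‖ ≤ C) : ‖⨍ t in a..b, f t‖ ≤ C := by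
  have hba := sub_pos.2 hab
  rw [interval_average_eq, norm_smul, Real.norm_of_nonneg (inv_nonneg.2 hba.le),
    inv_mul_le_iff₀ hba, mul_comm, ← abs_of_pos hba]
  exact intervalIntegral.norm_integral_le_of_norm_le_const (uIoc_of_le hab.le ▸ h)

lemma norm_intervalAverage_sub_intervalAverage_le_of_shift {f₁ f₂ : ℝ → V} (hf₁ : Continuous f₁)
    (hf₂ : Continuous f₂) {C ε : ℝ} (hC : ∀ t, ‖f₂ t‖ ≤ C) {a b s : ℝ} (hab : a < b)
    (h : ∀ t ∈ Ioc a b, ‖f₁ t - f₂ (t + s)‖ ≤ ε) :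
    ‖(⨍ t in a..b, f₁ t) - ⨍ t in a..b, f₂ t‖ ≤ ε + 2 * C * |s| / (b - a) := by
  have hf₂_shift : Continuous fun t => f₂ (t + s) := hf₂.comp (continuous_add_const s)
  have h_sub : (⨍ t in a..b, f₁ t) - ⨍ t in a..b, f₂ (t + s) = ⨍ t in a..b, f₁ t - f₂ (t + s) := by
    rw [interval_average_eq, interval_average_eq, interval_average_eq, ← smul_sub,
      intervalIntegral.integral_sub (hf₁.intervalIntegrable _ _)
        (hf₂_shift.intervalIntegrable _ _)]
  refine (norm_sub_le_norm_sub_add_norm_sub _ (⨍ t in a..b, f₂ (t + s)) _).trans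
    (add_le_add ?_ (norm_intervalAverage_comp_add_sub_le hf₂ hC hab s))
  rw [h_sub]
  exact norm_intervalAverage_le_of_norm_le_const hab h

end Normed

section SummableFunctions

variable {ι : Type*}

lemma memℓp_one_iff_summable {f : ι → ℝ} : Memℓp f 1 ↔ Summable f := by
  simpa [summable_abs_iff] using memℓp_gen_iff (p := 1) (f := f) (by simp)

lemma norm_eq_tsum_abs (f : ℓ¹(ι, ℝ)) : ‖f‖ = ∑' i, |f i| := by
  simp [lp.norm_eq_tsum_rpow (p := 1) (by simp)]

lemma tsum_abs_sub_eq_norm (f g : ℓ¹(ι, ℝ)) : ∑' i, |f i - g i| = ‖f - g‖ :=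
  (norm_eq_tsum_abs (f - g)).symm

/-- The probability densities on `ι`, as a subset of `ℓ¹(ι, ℝ)`. -/
def probDensities (ι : Type*) : Set ℓ¹(ι, ℝ) := {f | (∀ i, 0 ≤ f i) ∧ ∑' i, f i = 1}

lemma convex_probDensities : Convex ℝ (probDensities ι) := by
  rintro f ⟨hf, hf_sum⟩ g ⟨hg, hg_sum⟩ a b ha hb hab
  refine ⟨fun i => add_nonneg (mul_nonneg ha (hf i)) (mul_nonneg hb (hg i)), ?_⟩
  have h := map_add (lp.tsumCLM ℝ ι ℝ) (a • f) (b • g)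
  rw [map_smul, map_smul] at h
  simp only [lp.tsumCLM_apply, hf_sum, hg_sum] at h
  simpa [hab] using h

lemma isClosed_probDensities : IsClosed (probDensities ι) := by
  have h_nonneg : IsClosed {f : ℓ¹(ι, ℝ) | ∀ i, 0 ≤ f i} := by
    simp only [Set.ofPred_forall]
    exact isClosed_iInter fun i =>
      isClosed_le continuous_const (lp.lipschitzWith_one_eval 1 i).continuous
  exact h_nonneg.inter (isClosed_eq (lp.tsumCLM ℝ ι ℝ).continuous continuous_const)

lemma normalize_mem_probDensities {f : ℓ¹(ι, ℝ)} (hf : ∀ i, 0 ≤ f i) (hf_ne : f ≠ 0) :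
    normalize f ∈ probDensities ι := by
  refine ⟨fun i => mul_nonneg (inv_nonneg.2 (norm_nonneg f)) (hf i), ?_⟩
  have h_norm : ∑' i, f i = ‖f‖ := by simp only [norm_eq_tsum_abs, abs_of_nonneg (hf _)]
  calc ∑' i, normalize f i = ∑' i, ‖f‖⁻¹ * f i := rfl
    _ = 1 := by rw [tsum_mul_left, h_norm, inv_mul_cancel₀ (norm_ne_zero_iff.2 hf_ne)]

lemma exists_norm_normalize_sub_le_of_inv_pow [Nonempty ι] (k : ℕ) {ε : ℝ} (hε : 0 < ε) :
    ∃ δ > 0, ∀ (f g : ℓ¹(ι, ℝ)) (p q : ι → ℝ) (c : ℝ), (∀ i, f i = (p i ^ k)⁻¹) →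
      (∀ i, g i = (q i ^ k)⁻¹) → (∀ i, 0 < q i) → 0 < c →
      (∀ i, |p i - c * q i| ≤ δ * (c * q i)) → ‖normalize f - normalize g‖ ≤ ε := by
  have h_cont : ContinuousAt (fun r : ℝ => (r ^ k)⁻¹) 1 := by fun_prop (disch := simp)
  obtain ⟨δ, hδ, h_ratio⟩ := Metric.continuousAt_iff.1 h_cont (ε / 2) (half_pos hε)
  refine ⟨δ / 2, half_pos hδ, fun f g p q c hf hg hq hc hpq => ?_⟩
  have h_pointwise (i : ι) : |c ^ k * f i - g i| ≤ |ε / 2 * g i| := by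
    have hcq : 0 < c * q i := mul_pos hc (hq i)
    have h_close : dist (p i / (c * q i)) 1 < δ := by
      rw [Real.dist_eq, div_sub_one hcq.ne', abs_div, abs_of_pos hcq, div_lt_iff₀ hcq]
      exact (hpq i).trans_lt (by gcongr; exact half_lt_self hδ)
    have h_factor : c ^ k * f i - g i = (((p i / (c * q i)) ^ k)⁻¹ - (1 ^ k)⁻¹) * g i := by
      have := (hq i).ne'
      rw [hf, hg, div_pow, mul_pow, inv_div, one_pow, inv_one, sub_one_mul]
      field_simp
    rw [h_factor, abs_mul, abs_mul, abs_of_pos (half_pos hε)]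
    gcongr
    exact (h_ratio h_close).le
  have h_norm : ‖c ^ k • f - g‖ ≤ ε / 2 * ‖g‖ := by
    rw [← norm_smul_of_nonneg (half_pos hε).le]
    exact lp.norm_mono one_ne_zero h_pointwise
  have hg_ne : g ≠ 0 := by
    inhabit ι
    have h_pos : 0 < g default := by rw [hg]; exact inv_pos.2 (pow_pos (hq _) _)
    exact fun h => h_pos.ne' (by simp [h])
  rw [← normalize_smul_of_pos (pow_pos hc k) f]
  calc ‖normalize (c ^ k • f) - normalize g‖ ≤ 2 * (‖c ^ k • f - g‖ / ‖g‖) :=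
        norm_normalize_sub_normalize_le _ hg_ne
    _ ≤ 2 * (ε / 2) := mul_le_mul_of_nonneg_left
        (div_le_of_le_mul₀ (norm_nonneg g) (half_pos hε).le h_norm) zero_le_two
    _ = ε := by ring

/-- The left regular representation of `G` on `ℓ¹(G, ℝ)`: `(g · f) h = f (g⁻¹ * h)`. -/
def leftTranslate {G : Type*} [Group G] (g : G) : ℓ¹(G, ℝ) →ₗᵢ[ℝ] ℓ¹(G, ℝ) where
  toFun f := ⟨fun h => f (g⁻¹ * h), memℓp_one_iff_summable.2
    ((memℓp_one_iff_summable.1 (lp.memℓp f)).comp_injective (mul_right_injective g⁻¹))⟩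
  map_add' _ _ := rfl
  map_smul' _ _ := rfl
  norm_map' f := by
    simp only [norm_eq_tsum_abs]
    exact (Equiv.mulLeft g⁻¹).tsum_eq fun h => |f h|

lemma normalize_leftTranslate {G : Type*} [Group G] (g : G) (f : ℓ¹(G, ℝ)) :
    normalize (leftTranslate g f) = leftTranslate g (normalize f) := by
  simp only [NormedSpace.normalize, LinearIsometry.norm_map, map_smul]

end SummableFunctions

section Stretch

variable {E F : Type*} [NormedAddCommGroup E] [InnerProductSpace ℝ E]
  [NormedAddCommGroup F] [InnerProductSpace ℝ F]

/-- The positive definite quadratic form `r ↦ ‖r‖² + ⟪x, r⟫²`, which stretches `E` in the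
direction of `x`. As `t` grows, the forms `stretch (exp t • u)` run, up to scale, along a geodesic
ray in the symmetric space of `E` whose end point is the direction of `u`. -/
def stretch (x r : E) : ℝ := ‖r‖ ^ 2 + ⟪x, r⟫_ℝ ^ 2

lemma sq_norm_le_stretch (x r : E) : ‖r‖ ^ 2 ≤ stretch x r :=
  le_add_of_nonneg_right (sq_nonneg _)

lemma stretch_neg_left (x r : E) : stretch (-x) r = stretch x r := by
  rw [stretch, inner_neg_left, neg_sq, stretch]

lemma abs_stretch_sub_stretch_le (x y r : E) :
    |stretch x r - stretch y r| ≤ ‖x - y‖ * ‖x + y‖ * stretch y r := by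
  have h_factor : stretch x r - stretch y r = ⟪x - y, r⟫_ℝ * ⟪x + y, r⟫_ℝ := by
    rw [stretch, stretch, inner_sub_left, inner_add_left]
    ring
  calc |stretch x r - stretch y r|
      = |⟪x - y, r⟫_ℝ| * |⟪x + y, r⟫_ℝ| := by rw [h_factor, abs_mul]
    _ ≤ (‖x - y‖ * ‖r‖) * (‖x + y‖ * ‖r‖) := by gcongr <;> exact abs_real_inner_le_norm _ _
    _ = ‖x - y‖ * ‖x + y‖ * ‖r‖ ^ 2 := by ring
    _ ≤ ‖x - y‖ * ‖x + y‖ * stretch y r := by gcongr; exact sq_norm_le_stretch y r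

lemma abs_sq_norm_map_sub_le (S : E →L[ℝ] F) {σ C : ℝ} (hσ : 0 ≤ σ) (hσC : σ ≤ C)
    (hSC : ‖S‖ ≤ C) {s u : E} (hu : ‖S u‖ = σ * ‖u‖) (hsu : ⟪s, u⟫_ℝ = 0) :
    |‖S (s + u)‖ ^ 2 - σ ^ 2 * ‖s + u‖ ^ 2| ≤ C ^ 2 * (‖s‖ ^ 2 + 2 * (‖s‖ * ‖u‖)) := by
  have hC : 0 ≤ C := hσ.trans hσC
  have h_expand : ‖S (s + u)‖ ^ 2 - σ ^ 2 * ‖s + u‖ ^ 2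
      = (‖S s‖ ^ 2 - σ ^ 2 * ‖s‖ ^ 2) + 2 * ⟪S s, S u⟫_ℝ := by
    rw [map_add, norm_add_sq_real, norm_add_sq_real, hu, hsu]
    ring
  have h_s : ‖S s‖ ≤ C * ‖s‖ := S.le_of_opNorm_le hSC s
  have h_diag : |‖S s‖ ^ 2 - σ ^ 2 * ‖s‖ ^ 2| ≤ C ^ 2 * ‖s‖ ^ 2 := by
    rw [← mul_pow, ← mul_pow]
    exact abs_sub_le_of_nonneg_of_le (by positivity) (by gcongr) (by positivity) (by gcongr)
  have h_cross : |⟪S s, S u⟫_ℝ| ≤ C ^ 2 * (‖s‖ * ‖u‖) :=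
    calc |⟪S s, S u⟫_ℝ| ≤ ‖S s‖ * ‖S u‖ := abs_real_inner_le_norm _ _
      _ ≤ (C * ‖s‖) * (C * ‖u‖) := by rw [hu]; gcongr
      _ = C ^ 2 * (‖s‖ * ‖u‖) := by ring
  rw [h_expand]
  refine (abs_add_le _ _).trans ?_
  rw [abs_mul, abs_two]
  linarith

/-- Only the component of `r` along `w` contributes, and `stretch w` exceeds `‖·‖ ^ 2` there by the
factor `1 + ‖w‖ ^ 2`. -/
lemma norm_mul_abs_sq_norm_map_sub_le (S : E →L[ℝ] F) {σ C : ℝ} (hσ : 0 ≤ σ) (hσC : σ ≤ C)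
    (hSC : ‖S‖ ≤ C) {w : E} (hS : ∀ u, ⟪w, u⟫_ℝ = 0 → ‖S u‖ = σ * ‖u‖) (r : E) :
    ‖w‖ * |‖S r‖ ^ 2 - σ ^ 2 * ‖r‖ ^ 2| ≤ 2 * C ^ 2 * stretch w r := by
  obtain ⟨s, hs, u, hu, rfl⟩ := (ℝ ∙ w).exists_add_mem_mem_orthogonal r
  have hwu : ⟪w, u⟫_ℝ = 0 := Submodule.mem_orthogonal_singleton_iff_inner_right.1 hu
  obtain ⟨a, rfl⟩ := Submodule.mem_span_singleton.1 hs
  have hsu : ⟪a • w, u⟫_ℝ = 0 := by rw [real_inner_smul_left, hwu, mul_zero]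
  have h_stretch : stretch w (a • w + u) = ‖a • w‖ ^ 2 + ‖u‖ ^ 2 + (‖w‖ * ‖a • w‖) ^ 2 := by
    have h_inner : ⟪w, a • w + u⟫_ℝ ^ 2 = (‖w‖ * ‖a • w‖) ^ 2 := by
      rw [inner_add_right, hwu, add_zero, real_inner_smul_right, real_inner_self_eq_norm_sq,
        norm_smul, mul_pow, mul_pow, mul_pow, Real.norm_eq_abs, sq_abs]
      ring
    rw [stretch, h_inner, norm_add_sq_real, hsu, mul_zero, add_zero]
  have h_young : ‖w‖ * (‖a • w‖ ^ 2 + 2 * (‖a • w‖ * ‖u‖))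
      ≤ 2 * (‖a • w‖ ^ 2 + ‖u‖ ^ 2 + (‖w‖ * ‖a • w‖) ^ 2) := by
    linarith [two_mul_le_add_sq (‖w‖ * ‖a • w‖) ‖u‖, two_mul_le_add_sq (‖w‖ * ‖a • w‖) ‖a • w‖,
      sq_nonneg ‖a • w‖, sq_nonneg ‖u‖, sq_nonneg (‖w‖ * ‖a • w‖)]
  calc ‖w‖ * |‖S (a • w + u)‖ ^ 2 - σ ^ 2 * ‖a • w + u‖ ^ 2|
      ≤ ‖w‖ * (C ^ 2 * (‖a • w‖ ^ 2 + 2 * (‖a • w‖ * ‖u‖))) := by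
        gcongr
        exact abs_sq_norm_map_sub_le S hσ hσC hSC (hS u hwu) hsu
    _ = C ^ 2 * (‖w‖ * (‖a • w‖ ^ 2 + 2 * (‖a • w‖ * ‖u‖))) := by ring
    _ ≤ C ^ 2 * (2 * stretch w (a • w + u)) := by rw [h_stretch]; gcongr
    _ = 2 * C ^ 2 * stretch w (a • w + u) := by ring

variable [CompleteSpace E] [CompleteSpace F]

lemma norm_mul_abs_stretch_adjoint_sub_le (T : E →L[ℝ] F) {C : ℝ} (hTC : ‖T‖ ≤ C) {x : E}
    (hTx : T x ≠ 0) (hxC : ‖x‖ ≤ C * ‖T x‖)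
    (hT : ∀ u, ⟪T x, u⟫_ℝ = 0 → ‖T.adjoint u‖ = ‖x‖ / ‖T x‖ * ‖u‖) (r : F) :
    ‖x‖ * |stretch x (T.adjoint r) - (‖x‖ / ‖T x‖) ^ 2 * stretch ((‖T x‖ / ‖x‖) • T x) r|
      ≤ 2 * C ^ 2 * ((‖x‖ / ‖T x‖) ^ 2 * stretch ((‖T x‖ / ‖x‖) • T x) r) := by
  have hx : 0 < ‖x‖ := norm_pos_iff.2 fun h => hTx (by rw [h, map_zero])
  have hTx' : 0 < ‖T x‖ := norm_pos_iff.2 hTx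
  set σ := ‖x‖ / ‖T x‖ with hσ_def
  set w := (‖T x‖ / ‖x‖) • T x with hw_def
  have hσ : 0 < σ := div_pos hx hTx'
  have hσ_inv : ‖T x‖ / ‖x‖ = σ⁻¹ := (inv_div _ _).symm
  have hσC : σ ≤ C := (div_le_iff₀ hTx').2 hxC
  have h_norm : σ ^ 2 * ‖w‖ = ‖x‖ := by
    rw [hw_def, norm_smul, Real.norm_of_nonneg (by positivity)]
    simp only [hσ_def]
    field_simp
  have h_diff : stretch x (T.adjoint r) - σ ^ 2 * stretch w r
      = ‖T.adjoint r‖ ^ 2 - σ ^ 2 * ‖r‖ ^ 2 := by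
    rw [stretch, stretch, ContinuousLinearMap.adjoint_inner_right, hw_def, real_inner_smul_left,
      hσ_inv]
    field_simp
    ring
  have hS (u : F) (hu : ⟪w, u⟫_ℝ = 0) : ‖T.adjoint u‖ = σ * ‖u‖ := by
    refine hT u ?_
    rw [hw_def, real_inner_smul_left, hσ_inv] at hu
    exact (mul_eq_zero.1 hu).resolve_left (inv_ne_zero hσ.ne')
  have h_adjoint : ‖T.adjoint‖ ≤ C := (LinearIsometryEquiv.norm_map _ T).trans_le hTC
  rw [h_diff]
  calc ‖x‖ * |‖T.adjoint r‖ ^ 2 - σ ^ 2 * ‖r‖ ^ 2|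
      = σ ^ 2 * (‖w‖ * |‖T.adjoint r‖ ^ 2 - σ ^ 2 * ‖r‖ ^ 2|) := by rw [← h_norm, mul_assoc]
    _ ≤ σ ^ 2 * (2 * C ^ 2 * stretch w r) :=
        mul_le_mul_of_nonneg_left
          (norm_mul_abs_sq_norm_map_sub_le _ hσ.le hσC h_adjoint hS r) (sq_nonneg σ)
    _ = 2 * C ^ 2 * (σ ^ 2 * stretch w r) := by ring

end Stretch

section Plane

lemma adjoint_toEuclideanCLM {n : Type*} [Fintype n] [DecidableEq n] (M : Matrix n n ℝ) :
    (toEuclideanCLM (𝕜 := ℝ) M).adjoint = toEuclideanCLM (𝕜 := ℝ) Mᵀ := by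
  rw [← ContinuousLinearMap.star_eq_adjoint, ← map_star, Matrix.star_eq_conjTranspose,
    Matrix.conjTranspose_eq_transpose_of_trivial]

lemma norm_mul_norm_adjoint_of_inner_eq_zero (M : Matrix (Fin 2) (Fin 2) ℝ)
    {x u : EuclideanSpace ℝ (Fin 2)} (h : ⟪toEuclideanCLM (𝕜 := ℝ) M x, u⟫_ℝ = 0) :
    ‖toEuclideanCLM (𝕜 := ℝ) M x‖ * ‖(toEuclideanCLM (𝕜 := ℝ) M).adjoint u‖
      = |M.det| * (‖x‖ * ‖u‖) := by
  rw [← sq_eq_sq₀ (by positivity) (by positivity), mul_pow, mul_pow, mul_pow, sq_abs,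
    adjoint_toEuclideanCLM]
  simp only [EuclideanSpace.real_norm_sq_eq, PiLp.inner_apply, Matrix.ofLp_toEuclideanCLM,
    Matrix.mulVec, Matrix.vec2_dotProduct, Fin.sum_univ_two, Matrix.transpose_apply,
    Matrix.det_fin_two, RCLike.inner_apply, conj_trivial] at h ⊢
  -- The coefficient of `h` is `⟪M Mᵀ M x - det M • (adjugate M)ᵀ x, u⟫`, by Cayley–Hamilton.
  linear_combination ((M 0 0 ^ 2 + M 0 1 ^ 2 + M 1 0 ^ 2 + M 1 1 ^ 2)
    * ((M 0 0 * x 0 + M 0 1 * x 1) * u 0 + (M 1 0 * x 0 + M 1 1 * x 1) * u 1)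
    - 2 * (M 0 0 * M 1 1 - M 0 1 * M 1 0)
      * ((M 1 1 * x 0 - M 1 0 * x 1) * u 0 + (M 0 0 * x 1 - M 0 1 * x 0) * u 1)) * h

end Plane

section Energy

variable {n : Type*} [Fintype n] [DecidableEq n]

/-- The linear action of `SL(n, ℤ)` on Euclidean space. -/
noncomputable def euclideanAction :
    Matrix.SpecialLinearGroup n ℤ →* (EuclideanSpace ℝ n →L[ℝ] EuclideanSpace ℝ n) :=
  (toEuclideanCLM (n := n) (𝕜 := ℝ) : _ →* _).comp
    ((Int.castRingHom ℝ).mapMatrix.toMonoidHom.comp Matrix.SpecialLinearGroup.coeMonoidHom)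

lemma euclideanAction_apply (g : Matrix.SpecialLinearGroup n ℤ) :
    euclideanAction g = toEuclideanCLM (𝕜 := ℝ) ((g : Matrix n n ℤ).map fun z => (z : ℝ)) :=
  rfl

lemma euclideanAction_inv_apply_self (g : Matrix.SpecialLinearGroup n ℤ) (x : EuclideanSpace ℝ n) :
    euclideanAction g⁻¹ (euclideanAction g x) = x := by
  rw [← mul_apply_eq_comp, ← map_mul, inv_mul_cancel, map_one, one_apply_eq_self]

lemma euclideanAction_ne_zero (g : Matrix.SpecialLinearGroup n ℤ) {x : EuclideanSpace ℝ n}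
    (hx : x ≠ 0) : euclideanAction g x ≠ 0 := fun h =>
  hx (by rw [← euclideanAction_inv_apply_self g x, h, map_zero])

/-- The rows of an integer matrix as vectors of Euclidean space. -/
noncomputable def euclideanRow (A : Matrix.SpecialLinearGroup n ℤ) (i : n) : EuclideanSpace ℝ n :=
  WithLp.toLp 2 fun j => (A i j : ℝ)

lemma euclideanRow_mul (A g : Matrix.SpecialLinearGroup n ℤ) (i : n) :
    euclideanRow (A * g) i = (euclideanAction g).adjoint (euclideanRow A i) := by
  refine PiLp.ext fun j => ?_
  rw [euclideanAction_apply, adjoint_toEuclideanCLM, Matrix.ofLp_toEuclideanCLM]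
  simp [euclideanRow, Matrix.mulVec, dotProduct, Matrix.mul_apply, mul_comm]

lemma sum_sq_norm_euclideanRow (A : Matrix.SpecialLinearGroup n ℤ) :
    ∑ i, ‖euclideanRow A i‖ ^ 2
      = ‖(WithLp.toLp 2 fun p : n × n => (A p.1 p.2 : ℝ) : EuclideanSpace ℝ (n × n))‖ ^ 2 := by
  simp only [EuclideanSpace.real_norm_sq_eq, euclideanRow, Fintype.sum_prod_type]

/-- The total value of the form `stretch x` on the rows of `A`. -/
noncomputable def stretchEnergy (x : EuclideanSpace ℝ n) (A : Matrix.SpecialLinearGroup n ℤ) : ℝ :=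
  ∑ i, stretch x (euclideanRow A i)

lemma sum_sq_norm_le_stretchEnergy (x : EuclideanSpace ℝ n) (A : Matrix.SpecialLinearGroup n ℤ) :
    ∑ i, ‖euclideanRow A i‖ ^ 2 ≤ stretchEnergy x A :=
  Finset.sum_le_sum fun _ _ => sq_norm_le_stretch _ _

lemma sum_sq_norm_euclideanRow_pos [Nonempty n] (A : Matrix.SpecialLinearGroup n ℤ) :
    0 < ∑ i, ‖euclideanRow A i‖ ^ 2 := by
  refine Finset.sum_pos (fun i _ => pow_pos (norm_pos_iff.2 fun h => ?_) 2) Finset.univ_nonempty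
  refine A.row_ne_zero i (funext fun j => ?_)
  simpa [euclideanRow] using congrArg (· j) h

lemma stretchEnergy_pos [Nonempty n] (x : EuclideanSpace ℝ n) (A : Matrix.SpecialLinearGroup n ℤ) :
    0 < stretchEnergy x A :=
  (sum_sq_norm_euclideanRow_pos A).trans_le (sum_sq_norm_le_stretchEnergy x A)

lemma abs_stretchEnergy_sub_stretchEnergy_le (x y : EuclideanSpace ℝ n)
    (A : Matrix.SpecialLinearGroup n ℤ) :
    |stretchEnergy x A - stretchEnergy y A| ≤ ‖x - y‖ * ‖x + y‖ * stretchEnergy y A := by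
  rw [stretchEnergy, stretchEnergy, ← Finset.sum_sub_distrib, Finset.mul_sum]
  exact (Finset.abs_sum_le_sum_abs _ _).trans
    (Finset.sum_le_sum fun _ _ => abs_stretch_sub_stretch_le _ _ _)

lemma summable_norm_intCast_inv_pow {ι : Type*} [Fintype ι] {k : ℕ} (hk : Fintype.card ι < k) :
    Summable fun z : ι → ℤ =>
      ‖(WithLp.toLp 2 fun i => (z i : ℝ) : EuclideanSpace ℝ ι)‖⁻¹ ^ k := by
  let b := (EuclideanSpace.basisFun ι ℝ).toBasis
  have h_mem (z : ι → ℤ) : WithLp.toLp 2 (fun i => (z i : ℝ)) ∈ Submodule.span ℤ (range b) :=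
    (b.mem_span_iff_repr_mem ℤ _).2 fun i => ⟨z i, by simp [b]⟩
  have h_inj : Function.Injective fun z => (⟨_, h_mem z⟩ : Submodule.span ℤ (range b)) :=
    fun z w hzw => by simpa [funext_iff] using hzw
  have h_rank : Module.finrank ℤ (Submodule.span ℤ (range b)) < k := by
    rwa [ZLattice.rank ℝ, finrank_euclideanSpace]
  have h_lattice := ZLattice.summable_norm_pow_inv (Submodule.span ℤ (range b)) k h_rank
  exact (h_lattice.comp_injective h_inj :)

/-- The energy dominates the squared norm of a vector in `ℤ ^ (n × n)`, so any exponent above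
`(card n) ^ 2 / 2` would do. -/
lemma summable_inv_stretchEnergy_pow [Nonempty n] (x : EuclideanSpace ℝ n) :
    Summable fun A : Matrix.SpecialLinearGroup n ℤ =>
      (stretchEnergy x A ^ Fintype.card n ^ 2)⁻¹ := by
  have h_card : Fintype.card (n × n) < 2 * Fintype.card n ^ 2 := by
    rw [Fintype.card_prod, ← sq]
    exact lt_mul_of_one_lt_left (pow_pos Fintype.card_pos 2) one_lt_two
  have h_inj : Function.Injective
      fun (A : Matrix.SpecialLinearGroup n ℤ) (p : n × n) => A p.1 p.2 :=
    fun A B h => Matrix.SpecialLinearGroup.ext A B fun i j => congrFun h (i, j)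
  refine ((summable_norm_intCast_inv_pow h_card).comp_injective h_inj).of_nonneg_of_le
    (fun A => by have := stretchEnergy_pos x A; positivity) fun A => ?_
  have h_pos := sum_sq_norm_euclideanRow_pos A
  have h_le := sum_sq_norm_le_stretchEnergy x A
  rw [sum_sq_norm_euclideanRow] at h_pos h_le
  rw [Function.comp_apply, inv_pow, pow_mul]
  gcongr

end Energy

section Density

variable {n : Type*} [Fintype n] [DecidableEq n] [Nonempty n]

/-- The summable weight on `SL(n, ℤ)` concentrated on the `h` for which the rows of `h⁻¹` are short
for the form `stretch x`. -/
noncomputable def stretchWeight (x : EuclideanSpace ℝ n) : ℓ¹(Matrix.SpecialLinearGroup n ℤ, ℝ) :=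
  ⟨fun h => (stretchEnergy x h⁻¹ ^ Fintype.card n ^ 2)⁻¹, memℓp_one_iff_summable.2
    ((summable_inv_stretchEnergy_pow x).comp_injective inv_injective)⟩

lemma stretchWeight_pos (x : EuclideanSpace ℝ n) (h : Matrix.SpecialLinearGroup n ℤ) :
    0 < stretchWeight x h :=
  inv_pos.2 (pow_pos (stretchEnergy_pos x h⁻¹) _)

lemma leftTranslate_stretchWeight_apply (g h : Matrix.SpecialLinearGroup n ℤ)
    (x : EuclideanSpace ℝ n) :
    leftTranslate g (stretchWeight x) h
      = (stretchEnergy x (h⁻¹ * g) ^ Fintype.card n ^ 2)⁻¹ := by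
  rw [← inv_inv (h⁻¹ * g), mul_inv_rev, inv_inv]
  rfl

/-- The probability density on `SL(n, ℤ)` proportional to `stretchWeight x`. -/
noncomputable def stretchDensity (x : EuclideanSpace ℝ n) : ℓ¹(Matrix.SpecialLinearGroup n ℤ, ℝ) :=
  normalize (stretchWeight x)

lemma stretchWeight_ne_zero (x : EuclideanSpace ℝ n) : stretchWeight x ≠ 0 := fun h =>
  (stretchWeight_pos x 1).ne' (by rw [h]; rfl)

lemma stretchDensity_mem_probDensities (x : EuclideanSpace ℝ n) :
    stretchDensity x ∈ probDensities (Matrix.SpecialLinearGroup n ℤ) :=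
  normalize_mem_probDensities (fun h => (stretchWeight_pos x h).le) (stretchWeight_ne_zero x)

lemma norm_stretchDensity (x : EuclideanSpace ℝ n) : ‖stretchDensity x‖ = 1 :=
  norm_normalize (stretchWeight_ne_zero x)

lemma stretchDensity_neg (x : EuclideanSpace ℝ n) : stretchDensity (-x) = stretchDensity x := by
  simp only [stretchDensity, stretchWeight, stretchEnergy, stretch_neg_left]

lemma continuous_stretchDensity :
    Continuous (stretchDensity : EuclideanSpace ℝ n → ℓ¹(Matrix.SpecialLinearGroup n ℤ, ℝ)) := by
  refine continuous_iff_continuousAt.2 fun x => Metric.continuousAt_iff'.2 fun ε hε => ?_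
  obtain ⟨δ, hδ, h_close⟩ := exists_norm_normalize_sub_le_of_inv_pow
    (ι := Matrix.SpecialLinearGroup n ℤ) (Fintype.card n ^ 2) (half_pos hε)
  have h_lim : Tendsto (fun y => ‖y - x‖ * ‖y + x‖) (𝓝 x) (𝓝 0) := by
    have h_cont : Continuous fun y => ‖y - x‖ * ‖y + x‖ := by fun_prop
    simpa using h_cont.tendsto x
  filter_upwards [h_lim.eventually_lt_const hδ] with y hy
  rw [dist_eq_norm]
  refine (h_close _ _ (fun h => stretchEnergy y h⁻¹) (fun h => stretchEnergy x h⁻¹) 1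
    (fun _ => rfl) (fun _ => rfl) (fun _ => stretchEnergy_pos _ _) one_pos
    fun h => ?_).trans_lt (half_lt_self hε)
  rw [one_mul]
  exact (abs_stretchEnergy_sub_stretchEnergy_le y x h⁻¹).trans
    (mul_le_mul_of_nonneg_right hy.le (stretchEnergy_pos x h⁻¹).le)

end Density

section Distortion

variable {n : Type*} [Fintype n] [DecidableEq n] (g : Matrix.SpecialLinearGroup n ℤ)

/-- The largest factor by which `g` stretches or shrinks a vector of Euclidean space. -/
noncomputable def distortion : ℝ := max ‖euclideanAction g‖ ‖euclideanAction g⁻¹‖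

lemma norm_euclideanAction_le (x : EuclideanSpace ℝ n) :
    ‖euclideanAction g x‖ ≤ distortion g * ‖x‖ :=
  (euclideanAction g).le_of_opNorm_le (le_max_left _ _) x

lemma norm_le_norm_euclideanAction (x : EuclideanSpace ℝ n) :
    ‖x‖ ≤ distortion g * ‖euclideanAction g x‖ := by
  nth_rw 1 [← euclideanAction_inv_apply_self g x]
  exact (euclideanAction g⁻¹).le_of_opNorm_le (le_max_right _ _) _

lemma abs_log_norm_div_norm_le {v : EuclideanSpace ℝ n} (hv : v ≠ 0) :
    |Real.log (‖euclideanAction g v‖ / ‖v‖)| ≤ Real.log (distortion g) := by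
  have hv' : 0 < ‖v‖ := norm_pos_iff.2 hv
  have hgv' : 0 < ‖euclideanAction g v‖ := norm_pos_iff.2 (euclideanAction_ne_zero g hv)
  have h_upper : ‖euclideanAction g v‖ / ‖v‖ ≤ distortion g :=
    (div_le_iff₀ hv').2 (norm_euclideanAction_le g v)
  have h_lower : (‖euclideanAction g v‖ / ‖v‖)⁻¹ ≤ distortion g := by
    rw [inv_div]
    exact (div_le_iff₀ hgv').2 (norm_le_norm_euclideanAction g v)
  refine abs_le'.2 ⟨Real.log_le_log (by positivity) h_upper, ?_⟩
  rw [← Real.log_inv]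
  exact Real.log_le_log (by positivity) h_lower

end Distortion

section Equivariance

variable (g : Matrix.SpecialLinearGroup (Fin 2) ℤ)

lemma norm_adjoint_euclideanAction {x u : EuclideanSpace ℝ (Fin 2)} (hx : x ≠ 0)
    (hu : ⟪euclideanAction g x, u⟫_ℝ = 0) :
    ‖(euclideanAction g).adjoint u‖ = ‖x‖ / ‖euclideanAction g x‖ * ‖u‖ := by
  have h_det : ((g : Matrix (Fin 2) (Fin 2) ℤ).map fun z => (z : ℝ)).det = 1 := by
    rw [← Int.cast_det, g.det_coe, Int.cast_one]
  have hgx := euclideanAction_ne_zero g hx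
  rw [euclideanAction_apply] at hu hgx ⊢
  have h := norm_mul_norm_adjoint_of_inner_eq_zero _ hu
  rw [h_det, abs_one, one_mul] at h
  rw [div_mul_eq_mul_div, eq_div_iff (norm_ne_zero_iff.2 hgx), ← h, mul_comm]

lemma norm_mul_abs_stretchEnergy_mul_sub_le {x : EuclideanSpace ℝ (Fin 2)} (hx : x ≠ 0)
    (A : Matrix.SpecialLinearGroup (Fin 2) ℤ) :
    ‖x‖ * |stretchEnergy x (A * g) - (‖x‖ / ‖euclideanAction g x‖) ^ 2
        * stretchEnergy ((‖euclideanAction g x‖ / ‖x‖) • euclideanAction g x) A|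
      ≤ 2 * distortion g ^ 2 * ((‖x‖ / ‖euclideanAction g x‖) ^ 2
        * stretchEnergy ((‖euclideanAction g x‖ / ‖x‖) • euclideanAction g x) A) := by
  have hgx := euclideanAction_ne_zero g hx
  simp only [stretchEnergy, euclideanRow_mul, Finset.mul_sum]
  rw [← Finset.sum_sub_distrib]
  refine (mul_le_mul_of_nonneg_left (Finset.abs_sum_le_sum_abs _ _) (norm_nonneg x)).trans ?_
  rw [Finset.mul_sum]
  exact Finset.sum_le_sum fun i _ => norm_mul_abs_stretch_adjoint_sub_le (euclideanAction g)
    (le_max_left _ _) hgx (norm_le_norm_euclideanAction g x)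
    (fun u hu => norm_adjoint_euclideanAction g hx hu) _

lemma exists_norm_leftTranslate_stretchDensity_sub_le {ε : ℝ} (hε : 0 < ε) :
    ∃ R > 0, ∀ x : EuclideanSpace ℝ (Fin 2), R ≤ ‖x‖ →
      ‖leftTranslate g (stretchDensity x)
        - stretchDensity ((‖euclideanAction g x‖ / ‖x‖) • euclideanAction g x)‖ ≤ ε := by
  obtain ⟨δ, hδ, h_close⟩ := exists_norm_normalize_sub_le_of_inv_pow
    (ι := Matrix.SpecialLinearGroup (Fin 2) ℤ) (Fintype.card (Fin 2) ^ 2) hε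
  refine ⟨2 * distortion g ^ 2 / δ + 1, by positivity, fun x hx => ?_⟩
  have hx_pos : 0 < ‖x‖ := lt_of_lt_of_le (by positivity) hx
  have hgx_pos : 0 < ‖euclideanAction g x‖ :=
    norm_pos_iff.2 (euclideanAction_ne_zero g (norm_pos_iff.1 hx_pos))
  rw [stretchDensity, ← normalize_leftTranslate]
  refine h_close _ _ _ _ ((‖x‖ / ‖euclideanAction g x‖) ^ 2)
    (fun h => leftTranslate_stretchWeight_apply g h x) (fun _ => rfl)
    (fun _ => stretchEnergy_pos _ _) (by positivity) fun h => ?_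
  refine le_of_mul_le_mul_left ?_ hx_pos
  refine (norm_mul_abs_stretchEnergy_mul_sub_le g (norm_pos_iff.1 hx_pos) h⁻¹).trans ?_
  rw [← mul_assoc ‖x‖]
  have := stretchEnergy_pos ((‖euclideanAction g x‖ / ‖x‖) • euclideanAction g x) h⁻¹
  refine mul_le_mul_of_nonneg_right ((div_le_iff₀ hδ).1 ?_) (by positivity)
  linarith

end Equivariance

section MeanDensity

variable {n : Type*} [Fintype n] [DecidableEq n] [Nonempty n]

/-- The average of the densities `stretchDensity x` over the segment `T ≤ t ≤ 2 * T` of the ray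
`x = exp t • v / ‖v‖`. -/
noncomputable def meanDensity (T : ℝ) (v : EuclideanSpace ℝ n) :
    ℓ¹(Matrix.SpecialLinearGroup n ℤ, ℝ) :=
  ⨍ t in T..2 * T, stretchDensity (Real.exp t • normalize v)

lemma continuous_stretchDensity_exp_smul (u : EuclideanSpace ℝ n) :
    Continuous fun t : ℝ => stretchDensity (Real.exp t • u) :=
  continuous_stretchDensity.comp (Real.continuous_exp.smul continuous_const)

lemma meanDensity_mem_probDensities {T : ℝ} (hT : 0 < T) (v : EuclideanSpace ℝ n) :
    meanDensity T v ∈ probDensities (Matrix.SpecialLinearGroup n ℤ) := by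
  refine convex_probDensities.set_average_mem isClosed_probDensities ?_ ?_
    (ae_of_all _ fun t => stretchDensity_mem_probDensities _)
    (intervalIntegrable_iff.1 ((continuous_stretchDensity_exp_smul _).intervalIntegrable _ _))
  all_goals simp [hT]

lemma meanDensity_smul (T : ℝ) {c : ℝ} (hc : c ≠ 0) (v : EuclideanSpace ℝ n) :
    meanDensity T (c • v) = meanDensity T v := by
  rcases hc.lt_or_gt with hc | hc
  · simp only [meanDensity, normalize_smul_of_neg hc, smul_neg, stretchDensity_neg]
  · simp only [meanDensity, normalize_smul_of_pos hc]

lemma continuousAt_meanDensity (T : ℝ) {v : EuclideanSpace ℝ n} (hv : v ≠ 0) :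
    ContinuousAt (meanDensity T) v := by
  have h_average : Continuous fun u : EuclideanSpace ℝ n =>
      ⨍ t in T..2 * T, stretchDensity (Real.exp t • u) := by
    have h_joint : Continuous (Function.uncurry fun (u : EuclideanSpace ℝ n) (t : ℝ) =>
        stretchDensity (Real.exp t • u)) :=
      continuous_stretchDensity.comp (by fun_prop)
    simp only [interval_average_eq]
    exact Continuous.const_smul
      (intervalIntegral.continuous_parametric_intervalIntegral_of_continuous' h_joint T (2 * T))
      (2 * T - T)⁻¹
  exact h_average.continuousAt.comp (continuousAt_normalize hv)

lemma leftTranslate_meanDensity (g : Matrix.SpecialLinearGroup n ℤ) (T : ℝ)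
    (v : EuclideanSpace ℝ n) :
    leftTranslate g (meanDensity T v)
      = ⨍ t in T..2 * T, leftTranslate g (stretchDensity (Real.exp t • normalize v)) := by
  rw [meanDensity, interval_average_eq, interval_average_eq, map_smul,
    LinearIsometry.intervalIntegral_comp_comm]

end MeanDensity

lemma exists_norm_leftTranslate_stretchDensity_ray_sub_le
    (g : Matrix.SpecialLinearGroup (Fin 2) ℤ) {ε : ℝ} (hε : 0 < ε) :
    ∃ T₀ : ℝ, ∀ t ≥ T₀, ∀ v : EuclideanSpace ℝ (Fin 2), v ≠ 0 →
      ‖leftTranslate g (stretchDensity (Real.exp t • normalize v))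
        - stretchDensity (Real.exp (t + 2 * Real.log (‖euclideanAction g v‖ / ‖v‖))
          • normalize (euclideanAction g v))‖ ≤ ε := by
  obtain ⟨R, hR, h_close⟩ := exists_norm_leftTranslate_stretchDensity_sub_le g hε
  refine ⟨Real.log R, fun t ht v hv => ?_⟩
  have h_far : R ≤ ‖Real.exp t • normalize v‖ := by
    rwa [norm_smul, norm_normalize hv, mul_one, Real.norm_of_nonneg (Real.exp_nonneg t),
      ← Real.log_le_iff_le_exp hR]
  rw [← rescale_map_exp_smul_normalize _ (euclideanAction_ne_zero g hv)]
  exact h_close _ h_far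

lemma exists_norm_meanDensity_sub_leftTranslate_lt (g : Matrix.SpecialLinearGroup (Fin 2) ℤ)
    {ε : ℝ} (hε : 0 < ε) :
    ∃ T₀ : ℝ, ∀ T ≥ T₀, ∀ v : EuclideanSpace ℝ (Fin 2), v ≠ 0 →
      ‖meanDensity T (euclideanAction g v) - leftTranslate g (meanDensity T v)‖ < ε := by
  obtain ⟨T₁, h_ray⟩ := exists_norm_leftTranslate_stretchDensity_ray_sub_le g (half_pos hε)
  have h_shift : ∀ᶠ T : ℝ in atTop, 2 * 1 * (2 * Real.log (distortion g)) / T < ε / 2 :=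
    (tendsto_const_nhds.div_atTop tendsto_id).eventually_lt_const (half_pos hε)
  obtain ⟨T₀, hT₀⟩ := eventually_atTop.1
    ((eventually_gt_atTop 0).and ((eventually_ge_atTop T₁).and h_shift))
  refine ⟨T₀, fun T hT v hv => ?_⟩
  obtain ⟨hT_pos, hT_ray, hT_shift⟩ := hT₀ T hT
  have hτ : |2 * Real.log (‖euclideanAction g v‖ / ‖v‖)| ≤ 2 * Real.log (distortion g) := by
    rw [abs_mul, abs_two]
    exact mul_le_mul_of_nonneg_left (abs_log_norm_div_norm_le g hv) zero_le_two
  rw [norm_sub_rev, leftTranslate_meanDensity]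
  calc _ ≤ ε / 2 + 2 * 1 * |2 * Real.log (‖euclideanAction g v‖ / ‖v‖)| / (2 * T - T) :=
        norm_intervalAverage_sub_intervalAverage_le_of_shift
          ((leftTranslate g).continuous.comp (continuous_stretchDensity_exp_smul _))
          (continuous_stretchDensity_exp_smul _) (fun t => (norm_stretchDensity _).le)
          (lt_two_mul_self hT_pos) fun t ht => h_ray t (hT_ray.trans ht.1.le) v hv
    _ ≤ ε / 2 + 2 * 1 * (2 * Real.log (distortion g)) / T := by
        rw [two_mul T, add_sub_cancel_right]
        gcongr
    _ < ε := by linarith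

/-- Amenability of the `SL(2,ℤ)`-action on the real projective line, at the
level of `ℝ² \ {0}`: there is a sequence of maps `μ_n : ℝ² \ {0} → P(SL(2,ℤ))`
into probability densities which are `ℓ¹`-continuous, invariant under scaling
of the vector, and asymptotically equivariant uniformly in the vector. -/
theorem stmt_3 :
    ∃ μ : ℕ → {v : Fin 2 → ℝ // v ≠ 0} → (Matrix.SpecialLinearGroup (Fin 2) ℤ → ℝ),
      -- (i) each μ_n v is a probability density on SL(2,ℤ)
      (∀ n v, (∀ h, 0 ≤ μ n v h) ∧ Summable (μ n v) ∧ ∑' h, μ n v h = 1) ∧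
      -- (ii) each μ_n is continuous into ℓ¹(SL(2,ℤ))
      (∀ n (v₀ : {v : Fin 2 → ℝ // v ≠ 0}),
        Filter.Tendsto (fun v => ∑' h, |μ n v h - μ n v₀ h|) (nhds v₀) (nhds 0)) ∧
      -- (iii) μ_n only depends on the direction of v
      (∀ n (c : ℝ) (_ : c ≠ 0) (v : {v : Fin 2 → ℝ // v ≠ 0})
          (hcv : c • (v : Fin 2 → ℝ) ≠ 0), μ n ⟨c • (v : Fin 2 → ℝ), hcv⟩ = μ n v) ∧
      -- (iv) asymptotic equivariance, uniformly in v
      (∀ g : Matrix.SpecialLinearGroup (Fin 2) ℤ, ∀ ε > (0 : ℝ), ∃ N : ℕ, ∀ n ≥ N,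
        ∀ (v : {v : Fin 2 → ℝ // v ≠ 0})
          (hgv : ((g : Matrix (Fin 2) (Fin 2) ℤ).map (fun z => (z : ℝ))).mulVec
              (v : Fin 2 → ℝ) ≠ 0),
          ∑' h, |μ n ⟨((g : Matrix (Fin 2) (Fin 2) ℤ).map (fun z => (z : ℝ))).mulVec
              (v : Fin 2 → ℝ), hgv⟩ h - μ n v (g⁻¹ * h)| < ε) := by
  refine ⟨fun n v => meanDensity (n + 1) (WithLp.toLp 2 v.1), fun n v => ?_, fun n v₀ => ?_,
    fun n c hc v hcv => ?_, fun g ε hε => ?_⟩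
  · obtain ⟨h_nonneg, h_sum⟩ := meanDensity_mem_probDensities n.cast_add_one_pos (WithLp.toLp 2 v.1)
    exact ⟨h_nonneg, memℓp_one_iff_summable.1 (lp.memℓp _), h_sum⟩
  · have h_ne : WithLp.toLp 2 v₀.1 ≠ 0 := fun h => v₀.2 (congrArg WithLp.ofLp h)
    have h_toLp : Continuous fun v : {v : Fin 2 → ℝ // v ≠ 0} => WithLp.toLp 2 v.1 :=
      (PiLp.continuous_toLp 2 _).comp continuous_subtype_val
    simp only [tsum_abs_sub_eq_norm]
    exact tendsto_iff_norm_sub_tendsto_zero.1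
      ((continuousAt_meanDensity (n + 1) h_ne).tendsto.comp h_toLp.continuousAt)
  · exact congrArg _ (meanDensity_smul (n + 1) hc (WithLp.toLp 2 v.1))
  · obtain ⟨T₀, hT₀⟩ := exists_norm_meanDensity_sub_leftTranslate_lt g hε
    obtain ⟨N, hN⟩ := exists_nat_ge T₀
    refine ⟨N, fun n hn v _ => ?_⟩
    have h_ne : WithLp.toLp 2 v.1 ≠ 0 := fun h => v.2 (congrArg WithLp.ofLp h)
    have hn' : T₀ ≤ n + 1 := by exact_mod_cast (hN.trans (Nat.cast_le.2 hn)).trans (by simp)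
    exact (tsum_abs_sub_eq_norm _ _).trans_lt (hT₀ _ hn' _ h_ne)
end

section
/- There exists a map ζ : ℤ² → P(SL(2,ℤ)), where P(SL(2,ℤ)) denotes the set of probability densities on SL(2,ℤ), such that for every g ∈ SL(2,ℤ) and every a ∈ ℤ², the quantity ‖ζ(g·y) − g·ζ(y)‖₁ + ‖ζ(y + a) − ζ(y)‖₁ tends to 0 along the cofinite filter on ℤ². -/
/-!
For `y ≠ 0` and `K > 0` let `q` be the quadratic form `q(v) = (v ∧ y)² + K |v|² / |y|²` on `ℝ²`, and
let the energy of `γ ∈ SL(2, ℤ)` be the sum of `q` over the columns of `γ`. The weights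
`energy⁻³` are summable and define a density `ρ(y, K)`. Replacing `(y, v)` by `(g y, g v)` changes
only the second term of `q`, and `|g v|² / |g y|² - |v|² / |y|²` is divisible by `v ∧ y`; hence the
relative change of `q` is small once `K` is much smaller than `|y|⁴`. Replacing `y` by `y + a`
changes the first term by about `|a| |v| |v ∧ y|`, which is relatively small once `K` is much larger
than `|y|²`. No choice `K = K(y)` in this range is invariant under `y ↦ g y`, so one averages
`ρ(y, 2ᵏ)` over `|y| ^ (8/3) ≤ 2ᵏ ≤ |y| ^ (10/3)`: this window has length of order `log |y|` and its
ends move by a bounded amount under `y ↦ g y` and `y ↦ y + a`.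
-/

open Filter Topology
open scoped BigOperators Matrix MatrixGroups symmDiff

/-! ### Densities and the `ℓ¹` distance -/

section L1

variable {ι α κ : Type*}

/-- A probability density on a discrete set: a nonnegative function of total mass `1`. -/
structure IsProbabilityDensity (μ : ι → ℝ) : Prop where
  nonneg : ∀ i, 0 ≤ μ i
  hasSum : HasSum μ 1

/-- The `ℓ¹` distance `‖μ - ν‖₁`, meaningful for summable `μ - ν` only. -/
noncomputable def l1Dist (μ ν : ι → ℝ) : ℝ := ∑' i, |μ i - ν i|

/-- The rescaling of `f` to total mass `1`; identically zero if `f` has total mass `0` or is not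
summable. -/
noncomputable def normalizeMass (f : ι → ℝ) : ι → ℝ := fun i ↦ f i / ∑' j, f j

lemma l1Dist_nonneg (μ ν : ι → ℝ) : 0 ≤ l1Dist μ ν := tsum_nonneg fun _ ↦ abs_nonneg _

lemma l1Dist_triangle {μ ν ξ : ι → ℝ} (hμ : Summable μ) (hν : Summable ν) (hξ : Summable ξ) :
    l1Dist μ ξ ≤ l1Dist μ ν + l1Dist ν ξ := by
  rw [l1Dist, l1Dist, l1Dist, ← (hμ.sub hν).abs.tsum_add (hν.sub hξ).abs]
  exact (hμ.sub hξ).abs.tsum_le_tsum (fun i ↦ abs_sub_le _ _ _)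
    ((hμ.sub hν).abs.add (hν.sub hξ).abs)

lemma normalizeMass_comp_equiv (f : ι → ℝ) (e : α ≃ ι) :
    normalizeMass f ∘ e = normalizeMass (f ∘ e) := by
  funext a
  simp only [normalizeMass, Function.comp_apply, e.tsum_eq f]

lemma isProbabilityDensity_normalizeMass {f : ι → ℝ} (hf : ∀ i, 0 ≤ f i) (hsum : Summable f)
    (hpos : 0 < ∑' i, f i) : IsProbabilityDensity (normalizeMass f) where
  nonneg i := div_nonneg (hf i) hpos.le
  hasSum := by
    have hdiv := hsum.hasSum.div_const (∑' i, f i)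
    rwa [div_self hpos.ne'] at hdiv

lemma isProbabilityDensity_single [DecidableEq ι] (i : ι) :
    IsProbabilityDensity (Pi.single i (1 : ℝ)) where
  nonneg := (Pi.single_nonneg.2 zero_le_one : (0 : ι → ℝ) ≤ Pi.single i 1)
  hasSum := hasSum_pi_single i 1

lemma IsProbabilityDensity.comp_equiv {μ : ι → ℝ} (hμ : IsProbabilityDensity μ) (e : α ≃ ι) :
    IsProbabilityDensity (μ ∘ e) where
  nonneg a := hμ.nonneg (e a)
  hasSum := e.hasSum_iff.2 hμ.hasSum

lemma l1Dist_normalizeMass_le {f f' : ι → ℝ} {η : ℝ} (hf' : ∀ i, 0 ≤ f' i)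
    (hsum : Summable f) (hsum' : Summable f') (hpos : 0 < ∑' i, f i) (hpos' : 0 < ∑' i, f' i)
    (hclose : ∀ i, |f' i - f i| ≤ η * f i) :
    l1Dist (normalizeMass f') (normalizeMass f) ≤ 2 * η := by
  set W := ∑' i, f i with hW
  set W' := ∑' i, f' i with hW'
  have hdiff : ∑' i, |f' i - f i| ≤ η * W := by
    rw [hW, ← tsum_mul_left]
    exact (hsum'.sub hsum).abs.tsum_le_tsum hclose (hsum.mul_left η)
  have hmass : |W' - W| ≤ η * W := by
    rw [hW, hW', ← hsum'.tsum_sub hsum]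
    exact (norm_tsum_le_tsum_norm (hsum'.sub hsum).norm).trans hdiff
  have hpointwise (i : ι) :
      |f' i / W' - f i / W| ≤ |f' i - f i| / W + |W' - W| / (W * W') * f' i := by
    have hsplit : f' i / W' - f i / W = (f' i - f i) / W + (W - W') / (W * W') * f' i := by
      field_simp
      ring
    rw [hsplit]
    refine (abs_add_le _ _).trans_eq ?_
    rw [abs_div, abs_of_pos hpos, abs_mul, abs_div, abs_of_pos (mul_pos hpos hpos'),
      abs_of_nonneg (hf' i), abs_sub_comm W]
  have hbound := ((hsum'.sub hsum).abs.hasSum.div_const W).add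
    (hsum'.hasSum.mul_left (|W' - W| / (W * W')))
  calc l1Dist (normalizeMass f') (normalizeMass f)
      ≤ (∑' i, |f' i - f i|) / W + |W' - W| / (W * W') * W' :=
        hasSum_le hpointwise ((hsum'.div_const W').sub (hsum.div_const W)).abs.hasSum hbound
    _ = (∑' i, |f' i - f i| + |W' - W|) / W := by field_simp
    _ ≤ (η * W + η * W) / W := by gcongr
    _ = 2 * η := by field_simp; ring

lemma hasSum_expect {s : Finset κ} {f : κ → ι → ℝ} {a : κ → ℝ}
    (hf : ∀ k ∈ s, HasSum (f k) (a k)) : HasSum (𝔼 k ∈ s, f k) (𝔼 k ∈ s, a k) := by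
  rw [Finset.expect_eq_sum_div_card]
  simpa only [← Finset.expect_eq_sum_div_card, ← Finset.expect_apply] using
    (hasSum_sum hf).div_const (s.card : ℝ)

lemma IsProbabilityDensity.expect {s : Finset κ} (hs : s.Nonempty) {p : κ → ι → ℝ}
    (hp : ∀ k ∈ s, IsProbabilityDensity (p k)) : IsProbabilityDensity (𝔼 k ∈ s, p k) where
  nonneg i := by
    rw [Finset.expect_apply]
    exact Finset.expect_nonneg fun k hk ↦ (hp k hk).nonneg i
  hasSum := by
    simpa only [Finset.expect_const hs] using hasSum_expect fun k hk ↦ (hp k hk).hasSum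

lemma l1Dist_expect_le {s : Finset κ} (hs : s.Nonempty) {p q : κ → ι → ℝ} {ε : ℝ}
    (hp : ∀ k ∈ s, Summable (p k)) (hq : ∀ k ∈ s, Summable (q k))
    (hclose : ∀ k ∈ s, l1Dist (p k) (q k) ≤ ε) :
    l1Dist (𝔼 k ∈ s, p k) (𝔼 k ∈ s, q k) ≤ ε := by
  have hdist : HasSum (𝔼 k ∈ s, fun i ↦ |p k i - q k i|) (𝔼 k ∈ s, l1Dist (p k) (q k)) :=
    hasSum_expect fun k hk ↦ ((hp k hk).sub (hq k hk)).abs.hasSum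
  have hpointwise (i : ι) :
      |(𝔼 k ∈ s, p k) i - (𝔼 k ∈ s, q k) i| ≤ (𝔼 k ∈ s, fun i ↦ |p k i - q k i|) i := by
    simpa only [Finset.expect_apply, ← Finset.expect_sub_distrib] using Finset.abs_expect_le s _
  have hsum := Summable.of_nonneg_of_le (fun _ ↦ abs_nonneg _) hpointwise hdist.summable
  exact (hasSum_le hpointwise hsum.hasSum hdist).trans (Finset.expect_le hs hclose)

variable [DecidableEq κ]

lemma abs_sum_sub_sum_le_sum_symmDiff {A B : Finset κ} {u : κ → ℝ} (hu : ∀ k, 0 ≤ u k) :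
    |∑ k ∈ A, u k - ∑ k ∈ B, u k| ≤ ∑ k ∈ A ∆ B, u k := by
  rw [← Finset.sum_sdiff_sub_sum_sdiff, symmDiff_def, Finset.sup_eq_union,
    Finset.sum_union disjoint_sdiff_sdiff]
  exact (abs_sub _ _).trans_eq (by simp only [Finset.abs_sum_of_nonneg' hu])

lemma abs_card_sub_card_le_card_symmDiff (A B : Finset κ) :
    |(A.card : ℝ) - B.card| ≤ (A ∆ B).card := by
  simpa using abs_sum_sub_sum_le_sum_symmDiff (A := A) (B := B) fun _ ↦ zero_le_one' ℝ

lemma abs_expect_sub_expect_le {A B : Finset κ} (hA : A.Nonempty) {u : κ → ℝ}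
    (hu : ∀ k, 0 ≤ u k) :
    |𝔼 k ∈ A, u k - 𝔼 k ∈ B, u k| ≤
      (∑ k ∈ A ∆ B, u k + (A ∆ B).card * 𝔼 k ∈ B, u k) / A.card := by
  have hcard : (0 : ℝ) < A.card := by exact_mod_cast hA.card_pos
  have hmean : 0 ≤ 𝔼 k ∈ B, u k := Finset.expect_nonneg fun k _ ↦ hu k
  have hsplit : (𝔼 k ∈ A, u k - 𝔼 k ∈ B, u k) * A.card =
      (∑ k ∈ A, u k - ∑ k ∈ B, u k) - (A.card - B.card) * 𝔼 k ∈ B, u k := by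
    rw [← Finset.card_mul_expect A, ← Finset.card_mul_expect B]
    ring
  rw [le_div_iff₀ hcard, ← Nat.abs_cast A.card, ← abs_mul, hsplit]
  refine (abs_sub _ _).trans (add_le_add (abs_sum_sub_sum_le_sum_symmDiff hu) ?_)
  rw [abs_mul, abs_of_nonneg hmean]
  gcongr
  exact abs_card_sub_card_le_card_symmDiff A B

lemma l1Dist_expect_expect_le_card_symmDiff {A B : Finset κ} (hA : A.Nonempty) (hB : B.Nonempty)
    {p : κ → ι → ℝ} (hp : ∀ k, IsProbabilityDensity (p k)) :
    l1Dist (𝔼 k ∈ A, p k) (𝔼 k ∈ B, p k) ≤ 2 * (A ∆ B).card / A.card := by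
  have hmass (s : Finset κ) (hs : s.Nonempty) := IsProbabilityDensity.expect hs fun k _ ↦ hp k
  have hbound := ((hasSum_sum fun k (_ : k ∈ A ∆ B) ↦ (hp k).hasSum).add
    ((hmass B hB).hasSum.mul_left ((A ∆ B).card : ℝ))).div_const (A.card : ℝ)
  refine (hasSum_le (fun i ↦ ?_)
    ((hmass A hA).hasSum.summable.sub (hmass B hB).hasSum.summable).abs.hasSum hbound).trans_eq ?_
  · simpa only [Finset.expect_apply] using
      abs_expect_sub_expect_le hA fun k ↦ (hp k).nonneg i
  · simp only [Finset.sum_const, nsmul_eq_mul, mul_one]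
    ring

lemma l1Dist_expect_expect_le {A B : Finset κ} (hA : A.Nonempty) (hB : B.Nonempty)
    {p q : κ → ι → ℝ} {ε : ℝ} (hp : ∀ k, IsProbabilityDensity (p k))
    (hq : ∀ k ∈ A, IsProbabilityDensity (q k)) (hclose : ∀ k ∈ A, l1Dist (p k) (q k) ≤ ε) :
    l1Dist (𝔼 k ∈ B, p k) (𝔼 k ∈ A, q k) ≤ 2 * (A ∆ B).card / A.card + ε := by
  have hpA := IsProbabilityDensity.expect hA fun k _ ↦ hp k
  have hpB := IsProbabilityDensity.expect hB fun k _ ↦ hp k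
  have hqA := IsProbabilityDensity.expect hA hq
  refine (l1Dist_triangle hpB.hasSum.summable hpA.hasSum.summable hqA.hasSum.summable).trans
    (add_le_add ?_ ?_)
  · simpa only [l1Dist, abs_sub_comm] using l1Dist_expect_expect_le_card_symmDiff hA hB hp
  · exact l1Dist_expect_le hA (fun k _ ↦ (hp k).hasSum.summable)
      (fun k hk ↦ (hq k hk).hasSum.summable) hclose

end L1

lemma exists_pos_forall_abs_inv_pow_sub_inv_pow_le (n : ℕ) {η : ℝ} (hη : 0 < η) :
    ∃ δ > 0, ∀ s t : ℝ, 0 < s → |t - s| ≤ δ * s →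
      |(t ^ n)⁻¹ - (s ^ n)⁻¹| ≤ η * (s ^ n)⁻¹ := by
  have hcont : ContinuousAt (fun x : ℝ ↦ (x ^ n)⁻¹) 1 :=
    (continuousAt_id.pow n).inv₀ (by simp)
  obtain ⟨δ, hδ, hball⟩ := Metric.nhds_basis_closedBall.tendsto_iff
    Metric.nhds_basis_closedBall |>.1 hcont η hη
  refine ⟨δ, hδ, fun s t hs hst ↦ ?_⟩
  have hratio : |t / s - 1| ≤ δ := by
    rwa [div_sub_one hs.ne', abs_div, abs_of_pos hs, div_le_iff₀ hs]
  have hinv : |((t / s) ^ n)⁻¹ - 1| ≤ η := by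
    simpa [Real.dist_eq] using hball (t / s) hratio
  have hfactor : (t ^ n)⁻¹ - (s ^ n)⁻¹ = (((t / s) ^ n)⁻¹ - 1) * (s ^ n)⁻¹ := by
    rw [div_pow, inv_div, sub_mul, one_mul, div_mul_eq_mul_div, mul_inv_cancel₀ (by positivity),
      one_div]
  rw [hfactor, abs_mul, abs_of_pos (by positivity : 0 < (s ^ n)⁻¹)]
  gcongr

/-! ### Distortion of quadratic forms on the plane -/

section DotProduct

variable {n : Type*} [Fintype n]

lemma sq_norm_le_dotProduct_self (v : n → ℝ) : ‖v‖ ^ 2 ≤ v ⬝ᵥ v := by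
  have hself : 0 ≤ v ⬝ᵥ v := dotProduct_self_star_nonneg v
  refine Real.le_sqrt (norm_nonneg v) hself |>.1 <|
    (pi_norm_le_iff_of_nonneg (Real.sqrt_nonneg _)).2 fun i ↦ ?_
  refine Real.abs_le_sqrt ?_
  rw [dotProduct, pow_two]
  exact Finset.single_le_sum (f := fun j ↦ v j * v j) (fun j _ ↦ mul_self_nonneg _)
    (Finset.mem_univ i)

lemma tendsto_dotProduct_self_cocompact_atTop :
    Tendsto (fun v : n → ℝ ↦ v ⬝ᵥ v) (cocompact (n → ℝ)) atTop :=
  tendsto_atTop_mono sq_norm_le_dotProduct_self <|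
    (tendsto_pow_atTop two_ne_zero).comp tendsto_norm_cocompact_atTop

lemma sq_dotProduct_le (v y : n → ℝ) : (v ⬝ᵥ y) ^ 2 ≤ (v ⬝ᵥ v) * (y ⬝ᵥ y) := by
  simpa only [dotProduct, pow_two] using Finset.sum_mul_sq_le_sq_mul_sq Finset.univ v y

lemma abs_dotProduct_add_self_sub_le {y a : n → ℝ} {δ : ℝ} (hδ : 0 ≤ δ) (hδ1 : δ ≤ 1)
    (ha : a ⬝ᵥ a ≤ δ ^ 2 * (y ⬝ᵥ y)) :
    |(y + a) ⬝ᵥ (y + a) - y ⬝ᵥ y| ≤ 3 * δ * (y ⬝ᵥ y) := by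
  have hy : 0 ≤ y ⬝ᵥ y := dotProduct_self_star_nonneg y
  have haa : 0 ≤ a ⬝ᵥ a := dotProduct_self_star_nonneg a
  have hcross : |y ⬝ᵥ a| ≤ δ * (y ⬝ᵥ y) := by
    refine abs_le_of_sq_le_sq ((sq_dotProduct_le y a).trans ?_) (by positivity)
    calc (y ⬝ᵥ y) * (a ⬝ᵥ a) ≤ (y ⬝ᵥ y) * (δ ^ 2 * (y ⬝ᵥ y)) := by gcongr
      _ = (δ * (y ⬝ᵥ y)) ^ 2 := by ring
  have hsq : a ⬝ᵥ a ≤ δ * (y ⬝ᵥ y) := ha.trans (by gcongr; nlinarith)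
  have hexpand : (y + a) ⬝ᵥ (y + a) - y ⬝ᵥ y = 2 * (y ⬝ᵥ a) + a ⬝ᵥ a := by
    rw [add_dotProduct, dotProduct_add, dotProduct_add, dotProduct_comm a y]
    ring
  rw [hexpand, abs_le]
  constructor <;> linarith [abs_le.1 hcross]

end DotProduct

/-- The square of the Frobenius norm. -/
def frobeniusSq {m n : Type*} [Fintype m] [Fintype n] (A : Matrix m n ℝ) : ℝ :=
  ∑ i, ∑ j, A i j ^ 2

section Frobenius

variable {m n : Type*} [Fintype m] [Fintype n] (A : Matrix m n ℝ)

lemma frobeniusSq_nonneg : 0 ≤ frobeniusSq A :=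
  Finset.sum_nonneg fun _ _ ↦ Finset.sum_nonneg fun _ _ ↦ sq_nonneg _

lemma frobeniusSq_transpose : frobeniusSq Aᵀ = frobeniusSq A := Finset.sum_comm

lemma frobeniusSq_eq_sum_col : frobeniusSq A = ∑ j, A.col j ⬝ᵥ A.col j := by
  simp only [frobeniusSq, dotProduct, Matrix.col_apply, ← pow_two]
  exact Finset.sum_comm

lemma dotProduct_mulVec_self_le (v : n → ℝ) :
    (A *ᵥ v) ⬝ᵥ (A *ᵥ v) ≤ frobeniusSq A * (v ⬝ᵥ v) := by
  simp only [frobeniusSq, dotProduct, Matrix.mulVec, ← pow_two]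
  rw [Finset.sum_mul]
  exact Finset.sum_le_sum fun i _ ↦ Finset.sum_mul_sq_le_sq_mul_sq _ _ _

end Frobenius

lemma frobeniusSq_inv (g : SL(2, ℝ)) : frobeniusSq (g⁻¹).1 = frobeniusSq g.1 := by
  simp only [frobeniusSq, Matrix.SpecialLinearGroup.SL2_inv_expl, Fin.sum_univ_two,
    Matrix.cons_val_zero, Matrix.cons_val_one, neg_sq]
  ring

lemma one_le_frobeniusSq (g : SL(2, ℝ)) : 1 ≤ frobeniusSq g.1 := by
  have hdet : g.1 0 0 * g.1 1 1 - g.1 0 1 * g.1 1 0 = 1 := by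
    rw [← Matrix.det_fin_two, g.2]
  simp only [frobeniusSq, Fin.sum_univ_two]
  linarith [sq_nonneg (g.1 0 0 - g.1 1 1), sq_nonneg (g.1 0 1 + g.1 1 0)]

lemma dotProduct_self_le_mulVec (g : SL(2, ℝ)) (v : Fin 2 → ℝ) :
    v ⬝ᵥ v ≤ frobeniusSq g.1 * ((g.1 *ᵥ v) ⬝ᵥ (g.1 *ᵥ v)) := by
  have hinv : (g⁻¹).1 *ᵥ (g.1 *ᵥ v) = v := by
    rw [Matrix.mulVec_mulVec, ← Matrix.SpecialLinearGroup.coe_mul, inv_mul_cancel,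
      Matrix.SpecialLinearGroup.coe_one, Matrix.one_mulVec]
  simpa only [hinv, frobeniusSq_inv] using dotProduct_mulVec_self_le (g⁻¹).1 (g.1 *ᵥ v)

/-- The signed area of the parallelogram spanned by two vectors of the plane. -/
def wedge (v y : Fin 2 → ℝ) : ℝ := v 0 * y 1 - v 1 * y 0

lemma wedge_add_right (v y a : Fin 2 → ℝ) : wedge v (y + a) = wedge v y + wedge v a := by
  simp only [wedge, Pi.add_apply]
  ring

lemma wedge_mulVec (A : Matrix (Fin 2) (Fin 2) ℝ) (v y : Fin 2 → ℝ) :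
    wedge (A *ᵥ v) (A *ᵥ y) = A.det * wedge v y := by
  simp only [wedge, Matrix.mulVec, dotProduct, Fin.sum_univ_two, Matrix.det_fin_two]
  ring

lemma sq_wedge_add_sq_dotProduct (v y : Fin 2 → ℝ) :
    wedge v y ^ 2 + (v ⬝ᵥ y) ^ 2 = (v ⬝ᵥ v) * (y ⬝ᵥ y) := by
  simp only [wedge, dotProduct, Fin.sum_univ_two]
  ring

lemma sq_wedge_le (v y : Fin 2 → ℝ) : wedge v y ^ 2 ≤ (v ⬝ᵥ v) * (y ⬝ᵥ y) := by
  linarith [sq_wedge_add_sq_dotProduct v y, sq_nonneg (v ⬝ᵥ y)]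

-- Parallel vectors are stretched equally, so the difference has to be divisible by `wedge v y`.
lemma dotProduct_mulVec_self_mul_sub (A : Matrix (Fin 2) (Fin 2) ℝ) (v y : Fin 2 → ℝ) :
    (A *ᵥ v) ⬝ᵥ (A *ᵥ v) * (y ⬝ᵥ y) - (v ⬝ᵥ v) * ((A *ᵥ y) ⬝ᵥ (A *ᵥ y)) =
      -(wedge v y * (wedge v (Aᵀ *ᵥ A *ᵥ y) + wedge y (Aᵀ *ᵥ A *ᵥ v))) := by
  simp only [wedge, dotProduct, Matrix.mulVec, Fin.sum_univ_two, Matrix.transpose_apply]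
  ring

lemma sq_wedge_transpose_mulVec_le (A : Matrix (Fin 2) (Fin 2) ℝ) (v y : Fin 2 → ℝ) :
    wedge v (Aᵀ *ᵥ A *ᵥ y) ^ 2 ≤ frobeniusSq A ^ 2 * ((v ⬝ᵥ v) * (y ⬝ᵥ y)) := by
  have hv : 0 ≤ v ⬝ᵥ v := dotProduct_self_star_nonneg v
  have hA := frobeniusSq_nonneg A
  have hstretch : (Aᵀ *ᵥ A *ᵥ y) ⬝ᵥ (Aᵀ *ᵥ A *ᵥ y) ≤
      frobeniusSq A * (frobeniusSq A * (y ⬝ᵥ y)) := by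
    refine (dotProduct_mulVec_self_le Aᵀ _).trans ?_
    rw [frobeniusSq_transpose]
    gcongr
    exact dotProduct_mulVec_self_le A y
  calc wedge v (Aᵀ *ᵥ A *ᵥ y) ^ 2 ≤ _ := sq_wedge_le _ _
    _ ≤ (v ⬝ᵥ v) * (frobeniusSq A * (frobeniusSq A * (y ⬝ᵥ y))) := by gcongr
    _ = frobeniusSq A ^ 2 * ((v ⬝ᵥ v) * (y ⬝ᵥ y)) := by ring

/-- The quadratic form `v ↦ (v ∧ y)² + K |v|² / |y|²`, which measures how far `v` is from being
parallel to `y`; the second term, weighted by the parameter `K`, makes it positive definite. -/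
noncomputable def parallelForm (y : Fin 2 → ℝ) (K : ℝ) (v : Fin 2 → ℝ) : ℝ :=
  wedge v y ^ 2 + K * (v ⬝ᵥ v) / (y ⬝ᵥ y)

lemma parallelForm_nonneg (y : Fin 2 → ℝ) {K : ℝ} (hK : 0 ≤ K) (v : Fin 2 → ℝ) :
    0 ≤ parallelForm y K v :=
  add_nonneg (sq_nonneg _) <| div_nonneg
    (mul_nonneg hK (dotProduct_self_star_nonneg v)) (dotProduct_self_star_nonneg y)

lemma abs_le_mul_sq_add_of_sq_le {δ x X t : ℝ} (hδ : 0 ≤ δ) (hX : 0 ≤ X)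
    (ht : t ^ 2 ≤ 4 * (x ^ 2 * (δ ^ 2 * X))) : |t| ≤ δ * (x ^ 2 + X) := by
  refine abs_le_of_sq_le_sq (ht.trans ?_) (by positivity)
  linarith [mul_nonneg (sq_nonneg δ) (sq_nonneg (x ^ 2 - X))]

lemma abs_parallelForm_mulVec_sub_le (g : SL(2, ℝ)) {y : Fin 2 → ℝ} (hy : 0 < y ⬝ᵥ y)
    {K δ : ℝ} (hK : 0 ≤ K) (hδ : 0 ≤ δ)
    (hlarge : frobeniusSq g.1 ^ 4 * K ≤ δ ^ 2 * (y ⬝ᵥ y) ^ 2) (v : Fin 2 → ℝ) :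
    |parallelForm (g.1 *ᵥ y) K (g.1 *ᵥ v) - parallelForm y K v| ≤ δ * parallelForm y K v := by
  have hv : 0 ≤ v ⬝ᵥ v := dotProduct_self_star_nonneg v
  have hlower := dotProduct_self_le_mulVec g y
  have hB := add_sq_le (a := wedge v (g.1ᵀ *ᵥ g.1 *ᵥ y)) (b := wedge y (g.1ᵀ *ᵥ g.1 *ᵥ v))
  have hBv := sq_wedge_transpose_mulVec_le g.1 v y
  have hBy := sq_wedge_transpose_mulVec_le g.1 y v
  have hident := dotProduct_mulVec_self_mul_sub g.1 v y
  have hC := frobeniusSq_nonneg g.1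
  simp only [parallelForm, wedge_mulVec, g.2, one_mul]
  set C := frobeniusSq g.1
  set R := y ⬝ᵥ y
  set V := v ⬝ᵥ v
  set R' := (g.1 *ᵥ y) ⬝ᵥ (g.1 *ᵥ y)
  set B := wedge v (g.1ᵀ *ᵥ g.1 *ᵥ y) + wedge y (g.1ᵀ *ᵥ g.1 *ᵥ v)
  have hR' : 0 < R' := pos_of_mul_pos_right (hy.trans_le hlower) hC
  have hdiff : wedge v y ^ 2 + K * ((g.1 *ᵥ v) ⬝ᵥ (g.1 *ᵥ v)) / R' -
      (wedge v y ^ 2 + K * V / R) = -(K * wedge v y * B / (R * R')) := by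
    field_simp
    linear_combination K * hident
  have hBsq : B ^ 2 ≤ 4 * (C ^ 2 * (V * R)) := by linarith [mul_comm V R]
  have hinv : 1 / R' ≤ C / R := by
    rw [div_le_div_iff₀ hR' hy]
    linarith
  rw [hdiff, abs_neg]
  refine abs_le_mul_sq_add_of_sq_le hδ (by positivity) ?_
  calc (K * wedge v y * B / (R * R')) ^ 2
      = K ^ 2 * wedge v y ^ 2 / R ^ 2 * (B ^ 2 * (1 / R') ^ 2) := by field_simp
    _ ≤ K ^ 2 * wedge v y ^ 2 / R ^ 2 * (4 * (C ^ 2 * (V * R)) * (C / R) ^ 2) := by gcongr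
    _ = 4 * (wedge v y ^ 2 * (C ^ 4 * K / R ^ 2 * (K * V / R))) := by field_simp
    _ ≤ 4 * (wedge v y ^ 2 * (δ ^ 2 * (K * V / R))) := by
      gcongr
      rwa [div_le_iff₀ (by positivity)]

lemma abs_div_sub_div_le {c r s δ : ℝ} (hc : 0 ≤ c) (hr : 0 < r) (hδ : δ ≤ 1 / 2)
    (hrs : |s - r| ≤ δ * r) : |c / s - c / r| ≤ 2 * δ * (c / r) := by
  have hhalf : r / 2 ≤ s := by
    linarith [(abs_le.1 hrs).1, mul_le_mul_of_nonneg_right hδ hr.le]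
  have hs : 0 < s := by linarith
  have hδ0 : 0 ≤ δ := nonneg_of_mul_nonneg_left ((abs_nonneg _).trans hrs) hr
  have hfactor : c / s - c / r = (r - s) / s * (c / r) := by field_simp
  rw [hfactor, abs_mul, abs_of_nonneg (div_nonneg hc hr.le), abs_div, abs_of_pos hs, abs_sub_comm]
  gcongr
  rw [div_le_iff₀ hs]
  linarith [mul_le_mul_of_nonneg_left hhalf hδ0]

lemma abs_parallelForm_add_sub_le {y a : Fin 2 → ℝ} (hy : 0 < y ⬝ᵥ y)
    {K δ : ℝ} (hK : 0 ≤ K) (hδ : 0 ≤ δ) (hδ6 : δ ≤ 1 / 6)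
    (hshift : (a ⬝ᵥ a) * (y ⬝ᵥ y) ≤ δ ^ 2 * K) (ha : a ⬝ᵥ a ≤ δ ^ 2 * (y ⬝ᵥ y))
    (v : Fin 2 → ℝ) :
    |parallelForm (y + a) K v - parallelForm y K v| ≤ 8 * δ * parallelForm y K v := by
  have hv : 0 ≤ v ⬝ᵥ v := dotProduct_self_star_nonneg v
  have hnorm := abs_dotProduct_add_self_sub_le hδ (by linarith) ha
  have he := sq_wedge_le v a
  simp only [parallelForm, wedge_add_right]
  set R := y ⬝ᵥ y
  set V := v ⬝ᵥ v
  set R' := (y + a) ⬝ᵥ (y + a)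
  set x := wedge v y
  set e := wedge v a
  have hX : 0 ≤ K * V / R := by positivity
  have hesq : e ^ 2 ≤ δ ^ 2 * (K * V / R) := by
    rw [mul_div_assoc', le_div_iff₀ hy]
    calc e ^ 2 * R ≤ V * (a ⬝ᵥ a) * R := by gcongr
      _ = V * ((a ⬝ᵥ a) * R) := by ring
      _ ≤ V * (δ ^ 2 * K) := by gcongr
      _ = δ ^ 2 * (K * V) := by ring
  have hcross : |2 * x * e| ≤ δ * (x ^ 2 + K * V / R) := by
    refine abs_le_mul_sq_add_of_sq_le hδ hX ?_
    calc (2 * x * e) ^ 2 = 4 * (x ^ 2 * e ^ 2) := by ring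
      _ ≤ 4 * (x ^ 2 * (δ ^ 2 * (K * V / R))) := by gcongr
  have hquad : e ^ 2 ≤ δ * (K * V / R) := hesq.trans (by gcongr; nlinarith)
  have hregular : |K * V / R' - K * V / R| ≤ 2 * (3 * δ) * (K * V / R) :=
    abs_div_sub_div_le (by positivity) hy (by linarith) hnorm
  have hx : 0 ≤ δ * x ^ 2 := by positivity
  rw [abs_le] at hcross hregular ⊢
  constructor <;> nlinarith [sq_nonneg e]

/-! ### Energies on `SL(2, ℤ)` -/

section Energy

/-- The sum of `parallelForm y K` over the columns of `A`. For a square matrix `A` of determinant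
`1` it equals `|A⁻¹ y|² + K ‖A‖² / |y|²`, with the Frobenius norm. -/
noncomputable def energy {n : Type*} [Fintype n] (y : Fin 2 → ℝ) (K : ℝ)
    (A : Matrix (Fin 2) n ℝ) : ℝ :=
  ∑ j, parallelForm y K (A.col j)

variable {n : Type*} [Fintype n]

lemma mul_frobeniusSq_le_energy (y : Fin 2 → ℝ) (K : ℝ) (A : Matrix (Fin 2) n ℝ) :
    K / (y ⬝ᵥ y) * frobeniusSq A ≤ energy y K A := by
  rw [frobeniusSq_eq_sum_col, Finset.mul_sum, energy]
  refine Finset.sum_le_sum fun j _ ↦ ?_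
  rw [parallelForm, div_mul_eq_mul_div]
  exact le_add_of_nonneg_left (sq_nonneg _)

lemma energy_pos {y : Fin 2 → ℝ} (hy : 0 < y ⬝ᵥ y) {K : ℝ} (hK : 0 < K) (g : SL(2, ℝ)) :
    0 < energy y K g.1 :=
  (mul_pos (div_pos hK hy) (zero_lt_one.trans_le (one_le_frobeniusSq g))).trans_le
    (mul_frobeniusSq_le_energy y K g.1)

lemma abs_energy_mul_sub_le {y y' : Fin 2 → ℝ} {K δ : ℝ} {A : Matrix (Fin 2) (Fin 2) ℝ}
    (hclose : ∀ v, |parallelForm y' K (A *ᵥ v) - parallelForm y K v| ≤ δ * parallelForm y K v)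
    (B : Matrix (Fin 2) n ℝ) :
    |energy y' K (A * B) - energy y K B| ≤ δ * energy y K B := by
  simp only [energy, Finset.mul_sum, ← Finset.sum_sub_distrib]
  exact (Finset.abs_sum_le_sum_abs _ _).trans
    (Finset.sum_le_sum fun j _ ↦ hclose (B.col j))

lemma norm_intCast_comp {ι : Type*} [Fintype ι] (x : ι → ℤ) :
    ‖fun i ↦ (x i : ℝ)‖ = ‖x‖ := rfl

lemma norm_col_mul_norm_col_le_frobeniusSq (γ : SL(2, ℤ)) :
    ‖γ.1.col 0‖ * ‖γ.1.col 1‖ ≤ frobeniusSq (γ : SL(2, ℝ)).1 := by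
  have hcol (j : Fin 2) :
      ‖γ.1.col j‖ ^ 2 ≤ (γ : SL(2, ℝ)).1.col j ⬝ᵥ (γ : SL(2, ℝ)).1.col j := by
    rw [← norm_intCast_comp]
    exact sq_norm_le_dotProduct_self _
  rw [frobeniusSq_eq_sum_col, Fin.sum_univ_two]
  nlinarith [hcol 0, hcol 1, sq_nonneg (‖γ.1.col 0‖ - ‖γ.1.col 1‖), sq_nonneg ‖γ.1.col 0‖]

lemma norm_col_pos (γ : SL(2, ℤ)) (j : Fin 2) : 0 < ‖γ.1.col j‖ := by
  refine norm_pos_iff.2 fun hcol ↦ one_ne_zero (α := ℤ) ?_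
  rw [← γ.2]
  exact Matrix.det_eq_zero_of_column_eq_zero j (congrFun hcol)

lemma summable_inv_frobeniusSq_pow {k : ℕ} (hk : 2 < k) :
    Summable fun γ : SL(2, ℤ) ↦ (frobeniusSq (γ : SL(2, ℝ)).1 ^ k)⁻¹ := by
  have hlattice : Summable fun x : Fin 2 → ℤ ↦ (‖x‖ ^ k)⁻¹ := by
    simpa only [Real.rpow_neg (norm_nonneg _), Real.rpow_natCast] using
      EisensteinSeries.summable_one_div_norm_rpow (k := k) (by exact_mod_cast hk)
  have hcols : Function.Injective fun γ : SL(2, ℤ) ↦ (γ.1.col 0, γ.1.col 1) := by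
    intro γ γ' h
    ext i j
    fin_cases j
    exacts [congrFun (congrArg Prod.fst h) i, congrFun (congrArg Prod.snd h) i]
  refine Summable.of_nonneg_of_le (fun γ ↦ ?_) (fun γ ↦ ?_)
    ((hlattice.mul_of_nonneg hlattice (fun _ ↦ by positivity)
      fun _ ↦ by positivity).comp_injective hcols)
  · exact inv_nonneg.2 (pow_nonneg (frobeniusSq_nonneg _) k)
  · have h0 := norm_col_pos γ 0
    have h1 := norm_col_pos γ 1
    simp only [Function.comp_apply]
    rw [← mul_inv, ← mul_pow]
    gcongr
    exact norm_col_mul_norm_col_le_frobeniusSq γ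

end Energy

/-- The density on `SL(2, ℤ)` proportional to `energy y K ^ (-3)`: any exponent above `2` would make
the weights summable. -/
noncomputable def energyDensity (y : Fin 2 → ℝ) (K : ℝ) : SL(2, ℤ) → ℝ :=
  normalizeMass fun γ ↦ (energy y K (γ : SL(2, ℝ)).1 ^ 3)⁻¹

lemma summable_inv_energy_pow {y : Fin 2 → ℝ} (hy : 0 < y ⬝ᵥ y) {K : ℝ} (hK : 0 < K) {k : ℕ}
    (hk : 2 < k) : Summable fun γ : SL(2, ℤ) ↦ (energy y K (γ : SL(2, ℝ)).1 ^ k)⁻¹ := by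
  refine .of_nonneg_of_le (fun γ ↦ ?_) (fun γ ↦ ?_)
    ((summable_inv_frobeniusSq_pow hk).mul_left ((K / (y ⬝ᵥ y)) ^ k)⁻¹)
  · exact inv_nonneg.2 (pow_nonneg (energy_pos hy hK _).le k)
  · have hfrob := zero_lt_one.trans_le (one_le_frobeniusSq (γ : SL(2, ℝ)))
    rw [← mul_inv, ← mul_pow]
    gcongr
    exact mul_frobeniusSq_le_energy y K _

lemma tsum_inv_energy_pow_pos {y : Fin 2 → ℝ} (hy : 0 < y ⬝ᵥ y) {K : ℝ} (hK : 0 < K) {k : ℕ}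
    (hk : 2 < k) : 0 < ∑' γ : SL(2, ℤ), (energy y K (γ : SL(2, ℝ)).1 ^ k)⁻¹ :=
  have hpos (γ : SL(2, ℤ)) : 0 < (energy y K (γ : SL(2, ℝ)).1 ^ k)⁻¹ :=
    inv_pos.2 (pow_pos (energy_pos hy hK _) k)
  (summable_inv_energy_pow hy hK hk).tsum_pos (fun γ ↦ (hpos γ).le) 1 (hpos 1)

lemma isProbabilityDensity_energyDensity {y : Fin 2 → ℝ} (hy : 0 < y ⬝ᵥ y) {K : ℝ} (hK : 0 < K) :
    IsProbabilityDensity (energyDensity y K) :=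
  isProbabilityDensity_normalizeMass
    (fun _ ↦ inv_nonneg.2 (pow_nonneg (energy_pos hy hK _).le 3))
    (summable_inv_energy_pow hy hK (by norm_num)) (tsum_inv_energy_pow_pos hy hK (by norm_num))

lemma exists_pos_forall_l1Dist_energyDensity_le {ε : ℝ} (hε : 0 < ε) :
    ∃ δ > 0, ∀ (g : SL(2, ℤ)) {y y' : Fin 2 → ℝ}, 0 < y ⬝ᵥ y → 0 < y' ⬝ᵥ y' → ∀ {K : ℝ}, 0 < K →
      (∀ v, |parallelForm y' K ((g : SL(2, ℝ)).1 *ᵥ v) - parallelForm y K v| ≤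
        δ * parallelForm y K v) →
      l1Dist (energyDensity y' K) (energyDensity y K ∘ Equiv.mulLeft g⁻¹) ≤ ε := by
  obtain ⟨δ, hδ, hinv⟩ := exists_pos_forall_abs_inv_pow_sub_inv_pow_le 3 (half_pos hε)
  refine ⟨δ, hδ, fun g y y' hy hy' K hK hclose ↦ ?_⟩
  rw [← mul_div_cancel₀ ε two_ne_zero, energyDensity, energyDensity, normalizeMass_comp_equiv]
  refine l1Dist_normalizeMass_le
    (fun _ ↦ inv_nonneg.2 (pow_nonneg (energy_pos hy' hK _).le 3))
    ((Equiv.summable_iff _).2 (summable_inv_energy_pow hy hK (by norm_num)))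
    (summable_inv_energy_pow hy' hK (by norm_num))
    ?_ (tsum_inv_energy_pow_pos hy' hK (by norm_num)) fun γ ↦ ?_
  · simpa only [Function.comp_apply, Equiv.tsum_eq (Equiv.mulLeft g⁻¹) fun γ : SL(2, ℤ) ↦
      (energy y K (γ : SL(2, ℝ)).1 ^ 3)⁻¹] using tsum_inv_energy_pow_pos hy hK (by norm_num)
  · refine hinv _ _ (energy_pos hy hK _) ?_
    have hγ : (γ : SL(2, ℝ)).1 = (g : SL(2, ℝ)).1 * ((g⁻¹ * γ : SL(2, ℤ)) : SL(2, ℝ)).1 := by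
      rw [← Matrix.SpecialLinearGroup.coe_mul, ← map_mul, mul_inv_cancel_left]
    rw [hγ]
    exact abs_energy_mul_sub_le hclose _

/-! ### Averaging over scales -/

lemma tendsto_intLog_atTop {b : ℕ} (hb : 1 < b) : Tendsto (Int.log b : ℝ → ℤ) atTop atTop := by
  refine tendsto_atTop.2 fun L ↦ ?_
  filter_upwards [eventually_ge_atTop ((b : ℝ) ^ L), eventually_gt_atTop 0] with r hr hr0
  exact (Int.zpow_le_iff_le_log hb hr0).1 hr

lemma intLog_le_intLog_add {b : ℕ} (hb : 1 < b) {r s : ℝ} (hr : 0 < r) (hs : 0 < s) {d : ℤ}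
    (hsr : s ≤ (b : ℝ) ^ d * r) : Int.log b s ≤ Int.log b r + d := by
  have hb0 : (0 : ℝ) < b := by exact_mod_cast zero_lt_one.trans hb
  rw [← sub_le_iff_le_add, ← Int.zpow_le_iff_le_log hb hr, zpow_sub₀ hb0.ne',
    div_le_iff₀' (zpow_pos hb0 d)]
  exact (Int.zpow_log_le_self hb hs).trans hsr

lemma card_symmDiff_Icc_le (a b a' b' : ℤ) :
    ((Finset.Icc a b ∆ Finset.Icc a' b').card : ℤ) ≤ |a - a'| + |b - b'| := by
  have hsub : Finset.Icc a b ∆ Finset.Icc a' b' ⊆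
      Finset.Ico (min a a') (max a a') ∪ Finset.Ioc (min b b') (max b b') := by
    intro k
    simp only [Finset.mem_symmDiff, Finset.mem_union, Finset.mem_Icc, Finset.mem_Ico,
      Finset.mem_Ioc]
    omega
  have hcard := (Finset.card_le_card hsub).trans (Finset.card_union_le _ _)
  rw [Int.card_Ico, Int.card_Ioc] at hcard
  rw [← max_sub_min_eq_abs', ← max_sub_min_eq_abs']
  omega

/-- The exponents `k` with `r ^ (4/3) ≤ 2 ^ k ≤ r ^ (5/3)` up to bounded factors, so that `2 ^ k`
lies well above `r` and well below `r ^ 2`. Empty if `Int.log 8 r < 0`. -/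
noncomputable def dyadicWindow (r : ℝ) : Finset ℤ := Finset.Icc (4 * Int.log 8 r) (5 * Int.log 8 r)

lemma dyadicWindow_nonempty {r : ℝ} (hr : 1 ≤ r) : (dyadicWindow r).Nonempty := by
  have hlog : 0 ≤ Int.log 8 r :=
    (Int.zpow_le_iff_le_log (by norm_num) (zero_lt_one.trans_le hr)).1 (by simpa using hr)
  exact Finset.nonempty_Icc.2 (by linarith)

lemma tendsto_card_dyadicWindow_atTop :
    Tendsto (fun r ↦ ((dyadicWindow r).card : ℝ)) atTop atTop := by
  refine tendsto_atTop_mono (fun r ↦ ?_) <|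
    tendsto_intCast_atTop_atTop.comp (tendsto_intLog_atTop (b := 8) (by norm_num))
  have hcard : Int.log 8 r ≤ (dyadicWindow r).card := by
    rw [dyadicWindow, Int.card_Icc]
    omega
  simpa only [Function.comp_apply] using (by exact_mod_cast hcard)

lemma card_dyadicWindow_symmDiff_le {r s : ℝ} (hr : 0 < r) (hs : 0 < s) {d : ℤ}
    (hsr : s ≤ 8 ^ d * r) (hrs : r ≤ 8 ^ d * s) :
    ((dyadicWindow r ∆ dyadicWindow s).card : ℤ) ≤ 9 * d := by
  have hlog := intLog_le_intLog_add (b := 8) (by norm_num) hr hs (by exact_mod_cast hsr)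
  have hlog' := intLog_le_intLog_add (b := 8) (by norm_num) hs hr (by exact_mod_cast hrs)
  refine (card_symmDiff_Icc_le _ _ _ _).trans ?_
  rw [← mul_sub, ← mul_sub, abs_mul, abs_mul, ← add_mul]
  exact mul_le_mul_of_nonneg_left (abs_le.2 ⟨by linarith, by linarith⟩) (by norm_num)

lemma tendsto_card_dyadicWindow_symmDiff_div_card {α : Type*} {l : Filter α} {r s : α → ℝ}
    {C : ℝ} (hC : 0 < C) (hr : Tendsto r l atTop) (hsr : ∀ᶠ x in l, s x ≤ C * r x)
    (hrs : ∀ᶠ x in l, r x ≤ C * s x) :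
    Tendsto (fun x ↦ ((dyadicWindow (r x) ∆ dyadicWindow (s x)).card : ℝ) /
      (dyadicWindow (r x)).card) l (𝓝 0) := by
  obtain ⟨d, hd⟩ := pow_unbounded_of_one_lt C (by norm_num : (1 : ℝ) < 8)
  have hbounded : ∀ᶠ x in l, ((dyadicWindow (r x) ∆ dyadicWindow (s x)).card : ℝ) ≤ 9 * d := by
    filter_upwards [hr.eventually_gt_atTop 0, hsr, hrs] with x hr0 hsr hrs
    have hs0 : 0 < s x := pos_of_mul_pos_right (hr0.trans_le hrs) hC.le
    have hcard := card_dyadicWindow_symmDiff_le (d := d) hr0 hs0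
      (hsr.trans (by rw [zpow_natCast]; gcongr)) (hrs.trans (by rw [zpow_natCast]; gcongr))
    exact_mod_cast hcard
  refine squeeze_zero' (.of_forall fun x ↦ by positivity) ?_
    ((tendsto_card_dyadicWindow_atTop.comp hr).const_div_atTop (9 * (d : ℝ)))
  filter_upwards [hbounded] with x hx
  exact div_le_div_of_nonneg_right hx (Nat.cast_nonneg _)

lemma mul_zpow_intLog_le_of_mem_dyadicWindow {r : ℝ} (hr : 0 < r) {k : ℤ}
    (hk : k ∈ dyadicWindow r) :
    r * 2 ^ Int.log 8 r ≤ 8 * 2 ^ k ∧ 2 ^ k * 2 ^ Int.log 8 r ≤ r ^ 2 := by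
  have hle := Int.zpow_log_le_self (b := 8) (by norm_num) hr
  have hlt := Int.lt_zpow_succ_log_self (b := 8) (by norm_num) r
  obtain ⟨hk4, hk5⟩ := Finset.mem_Icc.1 hk
  generalize Int.log 8 r = m at *
  have hpow (n : ℤ) : ((8 : ℕ) : ℝ) ^ n = 2 ^ (3 * n) := by
    rw [zpow_mul]
    norm_num
  rw [hpow] at hle hlt
  constructor
  · calc r * 2 ^ m ≤ 2 ^ (3 * (m + 1)) * 2 ^ m := by gcongr
      _ = 8 * 2 ^ (4 * m) := by
        rw [← zpow_add₀ two_ne_zero, show 3 * (m + 1) + m = 3 + 4 * m by ring,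
          zpow_add₀ two_ne_zero]
        norm_num
      _ ≤ 8 * 2 ^ k := by gcongr; norm_num
  · calc (2 : ℝ) ^ k * 2 ^ m ≤ 2 ^ (5 * m) * 2 ^ m := by gcongr; norm_num
      _ = (2 ^ (3 * m)) ^ 2 := by
        rw [← zpow_add₀ two_ne_zero, pow_two, ← zpow_add₀ two_ne_zero]
        ring_nf
      _ ≤ r ^ 2 := by gcongr

lemma eventually_forall_mem_dyadicWindow {ε : ℝ} (hε : 0 < ε) :
    ∀ᶠ r : ℝ in atTop, ∀ k ∈ dyadicWindow r, r ≤ ε * 2 ^ k ∧ 2 ^ k ≤ ε * r ^ 2 := by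
  obtain ⟨n, hn⟩ := pow_unbounded_of_one_lt (8 / ε) one_lt_two
  filter_upwards [eventually_gt_atTop 0,
    (tendsto_intLog_atTop (b := 8) (by norm_num)).eventually_ge_atTop n] with r hr hlog k hk
  obtain ⟨hlower, hupper⟩ := mul_zpow_intLog_le_of_mem_dyadicWindow hr hk
  have hlarge : 8 ≤ ε * 2 ^ Int.log 8 r := by
    rw [← div_le_iff₀' hε]
    exact hn.le.trans (by rw [← zpow_natCast]; gcongr; norm_num)
  generalize (2 : ℝ) ^ Int.log 8 r = M at *
  constructor
  · linarith [mul_le_mul_of_nonneg_left hlarge hr.le, mul_le_mul_of_nonneg_left hlower hε.le]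
  · have hK : (0 : ℝ) ≤ 2 ^ k := by positivity
    linarith [mul_le_mul_of_nonneg_left hlarge hK, mul_le_mul_of_nonneg_left hupper hε.le]

/-- The average of the densities `energyDensity y (2 ^ k)` over the window of exponents attached
to `|y|²`. For `|y| < 1` it is the irrelevant point mass at `1`. -/
noncomputable def averagedDensity (y : Fin 2 → ℝ) : SL(2, ℤ) → ℝ :=
  if 1 ≤ y ⬝ᵥ y then 𝔼 k ∈ dyadicWindow (y ⬝ᵥ y), energyDensity y (2 ^ k) else Pi.single 1 1

lemma averagedDensity_of_one_le {y : Fin 2 → ℝ} (hy : 1 ≤ y ⬝ᵥ y) :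
    averagedDensity y = 𝔼 k ∈ dyadicWindow (y ⬝ᵥ y), energyDensity y (2 ^ k) :=
  if_pos hy

lemma isProbabilityDensity_averagedDensity (y : Fin 2 → ℝ) :
    IsProbabilityDensity (averagedDensity y) := by
  unfold averagedDensity
  split_ifs with hy
  · exact .expect (dyadicWindow_nonempty hy) fun k _ ↦
      isProbabilityDensity_energyDensity (zero_lt_one.trans_le hy) (by positivity)
  · exact isProbabilityDensity_single 1

lemma tendsto_l1Dist_averagedDensity {f : (Fin 2 → ℝ) → Fin 2 → ℝ} (g : SL(2, ℤ)) {C : ℝ}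
    (hC : 0 < C) (hupper : ∀ᶠ y in cocompact (Fin 2 → ℝ), f y ⬝ᵥ f y ≤ C * (y ⬝ᵥ y))
    (hlower : ∀ᶠ y in cocompact (Fin 2 → ℝ), y ⬝ᵥ y ≤ C * (f y ⬝ᵥ f y))
    (hform : ∀ δ > 0, ∀ᶠ y in cocompact (Fin 2 → ℝ), ∀ k ∈ dyadicWindow (y ⬝ᵥ y), ∀ v,
      |parallelForm (f y) (2 ^ k) ((g : SL(2, ℝ)).1 *ᵥ v) - parallelForm y (2 ^ k) v| ≤
        δ * parallelForm y (2 ^ k) v) :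
    Tendsto (fun y ↦ l1Dist (averagedDensity (f y)) (averagedDensity y ∘ Equiv.mulLeft g⁻¹))
      (cocompact (Fin 2 → ℝ)) (𝓝 0) := by
  have hN := tendsto_dotProduct_self_cocompact_atTop (n := Fin 2)
  refine tendsto_order.2 ⟨fun b hb ↦ .of_forall fun y ↦ hb.trans_le (l1Dist_nonneg _ _),
    fun ε hε ↦ ?_⟩
  obtain ⟨δ, hδ, hdist⟩ := exists_pos_forall_l1Dist_energyDensity_le (half_pos hε)
  have hwindow := (tendsto_card_dyadicWindow_symmDiff_div_card hC hN hupper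
    hlower).eventually_lt_const (by positivity : 0 < ε / 4)
  filter_upwards [hform δ hδ, hlower, hN.eventually_ge_atTop 1, hN.eventually_ge_atTop C, hwindow]
    with y hform hlower hy hyC hwindow
  have hfy : 1 ≤ f y ⬝ᵥ f y :=
    le_of_mul_le_mul_left ((mul_one C).trans_le (hyC.trans hlower)) hC
  have hy0 := zero_lt_one.trans_le hy
  have hfy0 := zero_lt_one.trans_le hfy
  have hcomp : averagedDensity y ∘ Equiv.mulLeft g⁻¹ =
      𝔼 k ∈ dyadicWindow (y ⬝ᵥ y), energyDensity y (2 ^ k) ∘ Equiv.mulLeft g⁻¹ := by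
    rw [averagedDensity_of_one_le hy]
    funext γ
    simp only [Function.comp_apply, Finset.expect_apply]
  rw [hcomp, averagedDensity_of_one_le hfy]
  calc _ ≤ 2 * _ / _ + ε / 2 :=
        l1Dist_expect_expect_le (dyadicWindow_nonempty hy) (dyadicWindow_nonempty hfy)
          (fun k ↦ isProbabilityDensity_energyDensity hfy0 (by positivity))
          (fun k _ ↦ (isProbabilityDensity_energyDensity hy0 (by positivity)).comp_equiv _)
          fun k hk ↦ hdist g hy0 hfy0 (by positivity) (hform k hk)
    _ < ε := by
      rw [mul_div_assoc]
      linarith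

lemma tendsto_l1Dist_averagedDensity_mulVec (g : SL(2, ℤ)) :
    Tendsto (fun y ↦ l1Dist (averagedDensity ((g : SL(2, ℝ)).1 *ᵥ y))
      (averagedDensity y ∘ Equiv.mulLeft g⁻¹)) (cocompact (Fin 2 → ℝ)) (𝓝 0) := by
  have hC := zero_lt_one.trans_le (one_le_frobeniusSq (g : SL(2, ℝ)))
  have hN := tendsto_dotProduct_self_cocompact_atTop (n := Fin 2)
  refine tendsto_l1Dist_averagedDensity g hC
    (.of_forall (dotProduct_mulVec_self_le _)) (.of_forall (dotProduct_self_le_mulVec _))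
    fun δ hδ ↦ ?_
  filter_upwards [hN.eventually_gt_atTop 0, hN.eventually (eventually_forall_mem_dyadicWindow
    (by positivity : 0 < δ ^ 2 / frobeniusSq (g : SL(2, ℝ)).1 ^ 4))] with y hy hwindow k hk
  refine abs_parallelForm_mulVec_sub_le _ hy (by positivity) hδ.le ?_
  rw [← le_div_iff₀' (by positivity), ← div_mul_eq_mul_div]
  exact (hwindow k hk).2

lemma eventually_forall_abs_parallelForm_add_sub_le (a : Fin 2 → ℝ) {δ : ℝ} (hδ : 0 < δ) :
    ∀ᶠ y in cocompact (Fin 2 → ℝ), ∀ k ∈ dyadicWindow (y ⬝ᵥ y), ∀ v,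
      |parallelForm (y + a) (2 ^ k) v - parallelForm y (2 ^ k) v| ≤
        δ * parallelForm y (2 ^ k) v := by
  have hN := tendsto_dotProduct_self_cocompact_atTop (n := Fin 2)
  have ha : 0 ≤ a ⬝ᵥ a := dotProduct_self_star_nonneg a
  obtain ⟨θ, hθ, hθδ⟩ := exists_between (lt_min (by positivity : 0 < δ / 8)
    (by norm_num : (0 : ℝ) < 1 / 6))
  rw [lt_min_iff] at hθδ
  filter_upwards [hN.eventually_gt_atTop 0, hN.eventually_ge_atTop (a ⬝ᵥ a / θ ^ 2),
    hN.eventually (eventually_forall_mem_dyadicWindow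
      (by positivity : 0 < θ ^ 2 / (a ⬝ᵥ a + 1)))] with y hy hya hwindow k hk v
  have hform : 0 ≤ parallelForm y (2 ^ k) v := parallelForm_nonneg y (by positivity) v
  have hshift : (a ⬝ᵥ a) * (y ⬝ᵥ y) ≤ θ ^ 2 * 2 ^ k := by
    have hlarge := (hwindow k hk).1
    rw [div_mul_eq_mul_div, le_div_iff₀' (by positivity)] at hlarge
    linarith
  refine (abs_parallelForm_add_sub_le hy (by positivity) hθ.le hθδ.2.le hshift ?_ v).trans ?_
  · rwa [← div_le_iff₀' (by positivity)]
  · gcongr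
    linarith [hθδ.1]

lemma tendsto_l1Dist_averagedDensity_add (a : Fin 2 → ℝ) :
    Tendsto (fun y ↦ l1Dist (averagedDensity (y + a)) (averagedDensity y))
      (cocompact (Fin 2 → ℝ)) (𝓝 0) := by
  have hcomparable : ∀ᶠ y in cocompact (Fin 2 → ℝ),
      |(y + a) ⬝ᵥ (y + a) - y ⬝ᵥ y| ≤ 1 / 2 * (y ⬝ᵥ y) := by
    filter_upwards [tendsto_dotProduct_self_cocompact_atTop.eventually_ge_atTop
      (36 * (a ⬝ᵥ a))] with y hy
    refine (abs_dotProduct_add_self_sub_le (δ := 1 / 6) ?_ ?_ ?_).trans_eq ?_ <;> linarith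
  have hone : ⇑(Equiv.mulLeft (1 : SL(2, ℤ))⁻¹) = id := by
    funext γ
    simp
  refine (tendsto_l1Dist_averagedDensity (f := (· + a)) 1 two_pos ?_ ?_ fun δ hδ ↦ ?_).congr
    fun y ↦ by rw [hone, Function.comp_id]
  · filter_upwards [hcomparable] with y hy
    linarith [abs_le.1 hy, (dotProduct_self_star_nonneg y : 0 ≤ y ⬝ᵥ y)]
  · filter_upwards [hcomparable] with y hy
    linarith [abs_le.1 hy]
  · simpa only [map_one, Matrix.SpecialLinearGroup.coe_one, Matrix.one_mulVec] using
      eventually_forall_abs_parallelForm_add_sub_le a hδ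

lemma tendsto_intCast_comp_cofinite_cocompact {ι : Type*} [Finite ι] :
    Tendsto (fun (y : ι → ℤ) i ↦ (y i : ℝ)) cofinite (cocompact (ι → ℝ)) := by
  simpa only [coprodᵢ_cofinite, coprodᵢ_cocompact] using
    Tendsto.pi_map_coprodᵢ fun _ : ι ↦ Int.tendsto_coe_cofinite

theorem stmt_6_general :
    ∃ ζ : (Fin 2 → ℝ) → SL(2, ℤ) → ℝ, (∀ y, IsProbabilityDensity (ζ y)) ∧
      ∀ (g : SL(2, ℤ)) (a : Fin 2 → ℝ),
        Tendsto (fun y ↦ l1Dist (ζ ((g : SL(2, ℝ)).1 *ᵥ y)) (ζ y ∘ Equiv.mulLeft g⁻¹) +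
          l1Dist (ζ (y + a)) (ζ y)) (cocompact (Fin 2 → ℝ)) (𝓝 0) := by
  refine ⟨averagedDensity, isProbabilityDensity_averagedDensity, fun g a ↦ ?_⟩
  simpa only [add_zero] using
    (tendsto_l1Dist_averagedDensity_mulVec g).add (tendsto_l1Dist_averagedDensity_add a)

/-- There is a map `ζ : ℤ² → P(SL(2,ℤ))` into probability densities such that
for every `g ∈ SL(2,ℤ)` and every `a ∈ ℤ²`,
`‖ζ(g·y) − g·ζ(y)‖₁ + ‖ζ(y + a) − ζ(y)‖₁ → 0` along the cofinite filter on ℤ². -/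
theorem stmt_6 :
    ∃ ζ : (Fin 2 → ℤ) → (Matrix.SpecialLinearGroup (Fin 2) ℤ → ℝ),
      (∀ y, (∀ h, 0 ≤ ζ y h) ∧ Summable (ζ y) ∧ ∑' h, ζ y h = 1) ∧
      (∀ (g : Matrix.SpecialLinearGroup (Fin 2) ℤ) (a : Fin 2 → ℤ),
        Filter.Tendsto
          (fun y => (∑' h, |ζ ((g : Matrix (Fin 2) (Fin 2) ℤ).mulVec y) h -
                            ζ y (g⁻¹ * h)|) +
                    (∑' h, |ζ (y + a) h - ζ y h|))
          Filter.cofinite (nhds 0)) := by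
  obtain ⟨ζ, hdensity, hlim⟩ := stmt_6_general
  refine ⟨fun y ↦ ζ fun i ↦ y i, fun y ↦ ⟨(hdensity _).nonneg, (hdensity _).hasSum.summable,
    (hdensity _).hasSum.tsum_eq⟩, fun g a ↦ ?_⟩
  refine ((hlim g fun i ↦ a i).comp tendsto_intCast_comp_cofinite_cocompact).congr fun y ↦ ?_
  have hcast_mulVec : (g : SL(2, ℝ)).1 *ᵥ (fun i ↦ (y i : ℝ)) = fun i ↦ ((g.1 *ᵥ y) i : ℝ) :=
    funext fun i ↦ ((Int.castRingHom ℝ).map_mulVec g.1 y i).symm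
  have hcast_add : (fun i ↦ (y i : ℝ)) + (fun i ↦ (a i : ℝ)) = fun i ↦ ((y + a) i : ℝ) :=
    funext fun i ↦ (Int.cast_add (y i) (a i)).symm
  rw [Function.comp_apply, hcast_mulVec, hcast_add]
  rfl
end
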